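/- Let (R, m) be a regular local ring of dimension n ≥ 1 containing a field, and let p be a prime ideal of R with ht_R(p) = n − 1. Then there is a short exact sequence 0 → H_p^{n−1}(R) → E_R(R/p) → E → 0 in which E_R(R/p) is the injective hull of R/p, the first map is the inclusion into the injective hull, and E is a nonzero direct sum of copies of E_R(R/m); in particular inj.dim_R(H_p^{n−1}(R)) = 1 and μ^1(t, H_p^{n−1}(R)) = 0 for every prime ideal t ≠ m. -/

import Mathlib

open CategoryTheory Opposite

noncomputable section

/-- Krull dimension of the support of a module. -/
def moduleSuppDim (R : Type) [CommRing R] (M : Type) [AddCommGroup M] [Module R M] :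
    WithBot ℕ∞ :=
  Order.krullDim (Module.support R M)

/-- `M` has injective dimension at most `n` (as `R`-module), characterized by
vanishing of `Ext^i(N, M)` for all `i > n`. -/
def injDimLE (R : Type) [CommRing R] (M : Type) [AddCommGroup M] [Module R M] (n : ℕ) : Prop :=
  ∀ (N : ModuleCat R) (i : ℕ), n < i →
    Subsingleton (((Ext R (ModuleCat R) i).obj (op N)).obj (ModuleCat.of R M))

/-- The injective dimension of `M` as an `R`-module, valued in `ℕ∞`. -/
def injDim (R : Type) [CommRing R] (M : Type) [AddCommGroup M] [Module R M] : ℕ∞ :=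
  sInf {n : ℕ∞ | ∃ m : ℕ, (m : ℕ∞) = n ∧ injDimLE R M m}

/-- The height of an ideal: the infimum of the heights of primes containing it. -/
def idealHeight (R : Type) [CommRing R] (I : Ideal R) : ℕ∞ :=
  sInf {h : ℕ∞ | ∃ p : PrimeSpectrum R, I ≤ p.asIdeal ∧ Order.height p = h}

/-- A regular local ring: a Noetherian local ring whose maximal ideal can be generated
by `dim R` elements. -/
def IsRegularLocal (R : Type) [CommRing R] [IsLocalRing R] : Prop :=
  IsNoetherianRing R ∧
    ∃ s : Finset R, Ideal.span (s : Set R) = IsLocalRing.maximalIdeal R ∧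
      (s.card : WithBot ℕ∞) = ringKrullDim R

/-- A ring contains a field if some subring of it is a field. -/
def ContainsField (R : Type) [CommRing R] : Prop :=
  ∃ k : Subring R, IsField k

/-- The underlying module of the `i`-th local cohomology of `R` with support in `I`. -/
abbrev LocalCohomologyMod (R : Type) [CommRing R] (I : Ideal R) (i : ℕ) : Type :=
  (localCohomology I i).obj (ModuleCat.of R R)

/-- The `j`-th Bass number `μ^j(p, M) = dim_{κ(p)} Ext^j_{R_p}(κ(p), M_p)` is nonzero,
expressed as nontriviality of the `Ext` module. -/
def BassNumberNonzero (R : Type) [CommRing R] (p : Ideal R) [p.IsPrime]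
    (M : Type) [AddCommGroup M] [Module R M] (j : ℕ) : Prop :=
  Nontrivial
    (((Ext (Localization.AtPrime p) (ModuleCat (Localization.AtPrime p)) j).obj
        (op (ModuleCat.of (Localization.AtPrime p)
          (IsLocalRing.ResidueField (Localization.AtPrime p))))).obj
      (ModuleCat.of (Localization.AtPrime p) (LocalizedModule p.primeCompl M)))


/-- `f : M →ₗ[R] E` presents `E` as an injective hull (injective envelope) of `M`:
`E` is injective, `f` is injective, and the image of `f` is an essential submodule of `E`. -/
def IsInjectiveHull (R : Type) [CommRing R] {M E : Type} [AddCommGroup M] [Module R M]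
    [AddCommGroup E] [Module R E] (f : M →ₗ[R] E) : Prop :=
  Module.Injective R E ∧ Function.Injective f ∧
    ∀ N : Submodule R E, N ≠ ⊥ → N ⊓ LinearMap.range f ≠ ⊥

end

set_option linter.unusedSectionVars false


/-- exchange: an element of `m \ m^2` can replace one of the generators of `m`. -/
theorem aux_exchange {S : Type*} [CommRing S] [IsLocalRing S] [DecidableEq S]
    (s : Finset S) (hs : Ideal.span (s : Set S) = IsLocalRing.maximalIdeal S) (x : S)
    (hx : x ∈ IsLocalRing.maximalIdeal S) (hx2 : x ∉ (IsLocalRing.maximalIdeal S) ^ 2) :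
    ∃ y ∈ s, IsLocalRing.maximalIdeal S = Ideal.span {x} ⊔ Ideal.span ((s.erase y : Finset S) : Set S) := by
  have h1 : x ∈ Submodule.span S (s : Set S) := by
    change x ∈ Ideal.span (s : Set S); rw [hs]; exact hx
  rw [Submodule.mem_span_finset] at h1
  obtain ⟨c, -, hc⟩ := h1
  have : ∃ y ∈ s, c y ∉ IsLocalRing.maximalIdeal S := by
    by_contra! hcon
    apply hx2
    rw [← hc, pow_two]
    refine Ideal.sum_mem _ fun y hy => Ideal.mul_mem_mul (hcon y hy) ?_
    rw [← hs]; exact Ideal.subset_span hy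
  obtain ⟨y, hy, hcy⟩ := this
  refine ⟨y, hy, le_antisymm ?_ ?_⟩
  · rw [← hs, Ideal.span_le]
    intro z hz
    by_cases hzy : z = y
    · subst hzy
      have hu : IsUnit (c z) := by simpa using! hcy
      obtain ⟨u, hu⟩ := hu
      have e : z = (↑u⁻¹ : S) * (x - ∑ i ∈ s.erase z, c i • i) := by
        rw [← hc, ← Finset.add_sum_erase s _ hy]
        simp only [smul_eq_mul, ← hu, add_sub_cancel_right]
        rw [← mul_assoc, Units.inv_mul, one_mul]
      have : (↑u⁻¹ : S) * (x - ∑ i ∈ s.erase z, c i • i) ∈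
        Ideal.span {x} ⊔ Ideal.span ((s.erase z : Finset S) : Set S) := by
        apply Ideal.mul_mem_left
        apply Ideal.sub_mem
        · exact Ideal.mem_sup_left (Ideal.mem_span_singleton_self x)
        · exact Ideal.mem_sup_right (Ideal.sum_mem _ fun i hi =>
            Ideal.mul_mem_left _ _ (Ideal.subset_span hi))
      rw [← e] at this
      exact this
    · exact Ideal.mem_sup_right (Ideal.subset_span (by simp [hzy]; exact hz))
  · rw [sup_le_iff]
    refine ⟨by rw [Ideal.span_le]; simpa using! hx, ?_⟩
    rw [← hs]
    exact Ideal.span_mono (by simp)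

theorem aux_quot_gens {S : Type*} [CommRing S] [IsLocalRing S] (J : Ideal S) (T : Set S)
    [IsLocalRing (S ⧸ J)]
    (h : IsLocalRing.maximalIdeal S = J ⊔ Ideal.span T) :
    Ideal.span (Ideal.Quotient.mk (J) '' T) =
      IsLocalRing.maximalIdeal (S ⧸ J) := by
  have h2 : Ideal.comap (Ideal.Quotient.mk (J))
      (IsLocalRing.maximalIdeal (S ⧸ J)) = IsLocalRing.maximalIdeal S :=
    IsLocalRing.eq_maximalIdeal
      (Ideal.comap_isMaximal_of_surjective _ Ideal.Quotient.mk_surjective)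
  rw [← Ideal.map_comap_of_surjective (Ideal.Quotient.mk (J))
    Ideal.Quotient.mk_surjective (IsLocalRing.maximalIdeal (S ⧸ J)), h2, h,
    Ideal.map_sup, Ideal.map_span]
  simp

theorem aux_withBot_cancel (d : ℕ) (x : WithBot ℕ∞)
    (h : (d : WithBot ℕ∞) + 1 ≤ x + 1) : (d : WithBot ℕ∞) ≤ x := by
  induction x with
  | bot => simp at h
  | coe x =>
    have h' : (d : ℕ∞) + 1 ≤ x + 1 := by exact_mod_cast h
    have : (d : ℕ∞) ≤ x := by simpa using h'
    exact_mod_cast this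

theorem aux_regular_domain (d : ℕ) : ∀ (S : Type) [CommRing S] [IsLocalRing S] [IsNoetherianRing S]
    (s : Finset S) (_ : Ideal.span (s : Set S) = IsLocalRing.maximalIdeal S) (_ : s.card ≤ d)
    (_ : (d : WithBot ℕ∞) ≤ ringKrullDim S), IsDomain S := by
  classical
  induction d with
  | zero =>
    intro S _ _ _ s hs hc _
    have : s = ∅ := by simpa using hc
    subst this
    have hf : IsField S := by
      rw [IsLocalRing.isField_iff_maximalIdeal_eq, ← hs]; simp
    exact hf.isDomain
  | succ d ih =>
    intro S _ _ _ s hs hc hdim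
    set m := IsLocalRing.maximalIdeal S with hm
    have hfin : (minimalPrimes S).Finite := minimalPrimes.finite_of_isNoetherianRing S
    -- choose x
    have hex : ∃ x ∈ m, x ∉ m ^ 2 ∧ ∀ P ∈ minimalPrimes S, x ∉ P := by
      by_contra! hcon
      have hsub : (m : Set S) ⊆ ⋃ I ∈ ((insert (m ^ 2) hfin.toFinset : Finset (Ideal S)) : Set (Ideal S)), (I : Set S) := by
        intro x hx
        by_cases h2 : x ∈ m ^ 2
        · exact Set.mem_biUnion (x := m ^ 2) (by simp) h2
        · obtain ⟨P, hP, hxP⟩ := hcon x hx h2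
          exact Set.mem_biUnion (x := P) (by simp [hP]) hxP
      rw [Ideal.subset_union_prime (f := fun I : Ideal S => I) (m ^ 2) (m ^ 2)] at hsub
      · obtain ⟨P, hP, hmP⟩ := hsub
        rw [Finset.mem_insert] at hP
        rcases hP with rfl | hP
        · have hb : m = ⊥ := by
            apply Submodule.eq_bot_of_le_smul_of_le_jacobson_bot m m (IsNoetherian.noetherian m)
            · rw [pow_two] at hmP; exact hmP
            · rw [IsLocalRing.jacobson_eq_maximalIdeal _ bot_ne_top]
          have hf : IsField S := by rw [IsLocalRing.isField_iff_maximalIdeal_eq]; exact hb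
          rw [ringKrullDim_eq_zero_of_isField hf] at hdim
          exact absurd hdim (by exact_mod_cast (by omega : ¬ (d + 1 ≤ 0)))
        · have hP' : P ∈ minimalPrimes S := by simpa using hP
          have hPp : P.IsPrime := hP'.1.1
          have : P = m := le_antisymm (IsLocalRing.le_maximalIdeal hPp.ne_top) hmP
          subst this
          have h0 : m.height = 0 := by
            exact (Ideal.height_eq_zero_iff).2 hP'
          have := IsLocalRing.maximalIdeal_height_eq_ringKrullDim (R := S)
          rw [← hm, h0] at this
          rw [← this] at hdim
          exact absurd hdim (by exact_mod_cast (by omega : ¬ (d + 1 ≤ 0)))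
      · intro I hI h1 _
        rw [Finset.mem_insert] at hI
        rcases hI with rfl | hI
        · exact absurd rfl h1
        · have : I ∈ minimalPrimes S := by simpa using hI
          exact this.1.1
    obtain ⟨x, hxm, hx2, hxP⟩ := hex
    obtain ⟨y, hy, hmy⟩ := aux_exchange s hs x hxm hx2
    have hne : Ideal.span {x} ≠ ⊤ := by
      rw [Ne, Ideal.span_singleton_eq_top]; simpa using! hxm
    have : Nontrivial (S ⧸ Ideal.span {x}) := Ideal.Quotient.nontrivial_iff.2 hne
    have : IsLocalRing (S ⧸ Ideal.span {x}) :=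
      IsLocalRing.of_surjective' (Ideal.Quotient.mk _) Ideal.Quotient.mk_surjective
    have hgen := aux_quot_gens _ _ hmy
    have hdom : IsDomain (S ⧸ Ideal.span {x}) := by
      refine ih _ ((s.erase y).image (Ideal.Quotient.mk (Ideal.span {x}))) ?_ ?_ ?_
      · rw [← hgen]; simp
      · refine Finset.card_image_le.trans ?_
        rw [Finset.card_erase_of_mem hy]; omega
      · have := ringKrullDim_le_ringKrullDim_quotient_add_card (R := S) {x}
          (by rw [IsLocalRing.ringJacobson_eq_maximalIdeal]; simpa using! hxm)
        have e1 : ((({x} : Finset S)) : Set S) = {x} := by simp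
        rw [e1] at this
        simp only [Finset.card_singleton, Nat.cast_one] at this
        have h3 := hdim.trans this
        push_cast at h3
        exact aux_withBot_cancel _ _ h3
    have hprime : (Ideal.span {x}).IsPrime := (Ideal.Quotient.isDomain_iff_prime _).1 hdom
    obtain ⟨P, hP, hPle⟩ := Ideal.exists_minimalPrimes_le (I := (⊥ : Ideal S)) (J := Ideal.span {x}) bot_le
    have hPp : P.IsPrime := hP.1.1
    have hPb : P = ⊥ := by
      apply Submodule.eq_bot_of_le_smul_of_le_jacobson_bot m P (IsNoetherian.noetherian P)
      · intro z hz
        obtain ⟨w, rfl⟩ := Ideal.mem_span_singleton'.1 (hPle hz)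
        rw [mul_comm]
        have : w ∈ P := (hPp.mem_or_mem hz).resolve_right (hxP P hP)
        exact Ideal.mul_mem_mul hxm this
      · rw [IsLocalRing.jacobson_eq_maximalIdeal _ bot_ne_top]
    subst hPb
    exact IsDomain.of_bot_isPrime S

theorem aux_quot_local {S : Type*} [CommRing S] [IsLocalRing S] (J : Ideal S) (h : J ≠ ⊤) :
    IsLocalRing (S ⧸ J) := by
  have : Nontrivial (S ⧸ J) := Ideal.Quotient.nontrivial_iff.2 h
  exact IsLocalRing.of_surjective' (Ideal.Quotient.mk _) Ideal.Quotient.mk_surjective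

theorem aux_nat_cancel (i j : ℕ) (x : WithBot ℕ∞)
    (h : ((i + j : ℕ) : WithBot ℕ∞) ≤ x + (j : WithBot ℕ∞)) : (i : WithBot ℕ∞) ≤ x := by
  induction j with
  | zero => simpa using h
  | succ j ih =>
    apply ih
    apply aux_withBot_cancel
    push_cast at h ⊢
    simpa [add_assoc] using h

/-- A regular system of parameters gives a chain of primes. -/
theorem aux_regular_chain (S : Type) [CommRing S] [IsLocalRing S] [IsNoetherianRing S]
    (s : Finset S) (hs : Ideal.span (s : Set S) = IsLocalRing.maximalIdeal S)
    (n : ℕ) (hcard : s.card = n) (hdim : ringKrullDim S = n) :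
    ∃ (J : ℕ → Ideal S) (x : ℕ → S), J 0 = ⊥ ∧ J n = IsLocalRing.maximalIdeal S ∧
      ∀ i < n, (J i).IsPrime ∧ x i ∉ J i ∧ J (i + 1) = J i ⊔ Ideal.span {x i} := by
  classical
  let e := s.equivFinOfCardEq hcard
  let x : ℕ → S := fun i => if h : i < n then (e.symm ⟨i, h⟩ : S) else 0
  have hxs : ∀ i, i < n → x i ∈ s := fun i hi => by simp only [x, dif_pos hi]; exact (e.symm _).2
  have hsx : ∀ y ∈ s, ∃ i < n, x i = y := fun y hy => by
    refine ⟨e ⟨y, hy⟩, (e ⟨y, hy⟩).2, ?_⟩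
    simp [x]
  let J : ℕ → Ideal S := fun i => Ideal.span (x '' Set.Iio i)
  have hJn : J n = IsLocalRing.maximalIdeal S := by
    rw [← hs]
    refine congrArg Ideal.span ?_
    ext y
    constructor
    · rintro ⟨i, hi, rfl⟩; exact hxs i hi
    · intro hy; obtain ⟨i, hi, h⟩ := hsx y hy; exact ⟨i, hi, h⟩
  have hJle : ∀ i ≤ n, J i ≤ IsLocalRing.maximalIdeal S := fun i hi => by
    rw [← hJn]; exact Ideal.span_mono (Set.image_mono (Set.Iio_subset_Iio hi))
  have hJs : ∀ i, J (i + 1) = J i ⊔ Ideal.span {x i} := fun i => by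
    simp only [J]
    rw [← Ideal.span_union, ← Set.image_singleton, ← Set.image_union]
    congr 2
    ext j; simp
    try omega
  refine ⟨J, x, by simp [J], hJn, fun i hi => ⟨?_, ?_, hJs i⟩⟩
  · have hne : J i ≠ ⊤ := ne_top_of_le_ne_top
      (IsLocalRing.maximalIdeal.isMaximal S).ne_top (hJle i hi.le)
    have := aux_quot_local (J i) hne
    have hm : IsLocalRing.maximalIdeal S = J i ⊔
        Ideal.span (((Finset.Ico i n).image x : Finset S) : Set S) := by
      rw [← hJn]
      simp only [J]
      rw [← Ideal.span_union, Finset.coe_image, ← Set.image_union]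
      congr 2
      ext j; simp; omega
    have hg := aux_quot_gens (J i) _ hm
    rw [← Ideal.Quotient.isDomain_iff_prime]
    refine aux_regular_domain (n - i) (S ⧸ J i)
      (((Finset.Ico i n).image x).image (Ideal.Quotient.mk (J i))) ?_ ?_ ?_
    · rw [← hg]; simp
    · refine Finset.card_image_le.trans (Finset.card_image_le.trans ?_); simp
    · have h1 := ringKrullDim_le_ringKrullDim_quotient_add_card (R := S) ((Finset.range i).image x)
          (by rw [IsLocalRing.ringJacobson_eq_maximalIdeal]
              refine subset_trans ?_ (hJle i hi.le)
              refine subset_trans ?_ Ideal.subset_span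
              simp)
      have e1 : Ideal.span (((Finset.range i).image x : Finset S) : Set S) = J i := by
        simp [J]
      rw [e1, hdim] at h1
      have h2 : ((((Finset.range i).image x).card : ℕ) : WithBot ℕ∞) ≤ (i : WithBot ℕ∞) := by
        have : ((Finset.range i).image x).card ≤ i := by
          simpa using Finset.card_image_le (s := Finset.range i) (f := x)
        exact_mod_cast this
      have h3 := h1.trans (add_le_add_right h2 _)
      apply aux_nat_cancel (n - i) i
      have : n - i + i = n := by omega
      rw [this]; exact h3
  · intro hmem
    have hm : IsLocalRing.maximalIdeal S =
        Ideal.span ((((Finset.range n).erase i).image x : Finset S) : Set S) := by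
      apply le_antisymm
      · rw [← hJn]
        simp only [J]
        rw [Ideal.span_le]
        rintro _ ⟨j, hj, rfl⟩
        by_cases hji : j = i
        · subst hji
          refine (Ideal.span_mono ?_ : J j ≤ _) hmem
          rw [Finset.coe_image]
          apply Set.image_mono
          intro k hk
          simp at hk hj ⊢; omega
        · apply Ideal.subset_span
          simp only [Finset.coe_image]
          exact ⟨j, by simp at hj ⊢; exact ⟨hj, hji⟩, rfl⟩
      · rw [Ideal.span_le]
        intro y hy
        simp only [Finset.coe_image] at hy
        obtain ⟨j, hj, rfl⟩ := hy
        rw [← hs]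
        apply Ideal.subset_span
        simp at hj
        exact hxs j hj.1
    have h1 := ringKrullDim_le_spanFinrank_maximalIdeal S
    rw [hdim, hm] at h1
    have h2 := Submodule.spanFinrank_span_le_ncard_of_finite (R := S)
      (s := ((((Finset.range n).erase i).image x : Finset S) : Set S)) (Finset.finite_toSet _)
    rw [Set.ncard_coe_finset] at h2
    have h3 : (((Finset.range n).erase i).image x).card ≤ n - 1 := by
      refine Finset.card_image_le.trans ?_
      rw [Finset.card_erase_of_mem (by simpa using hi)]; simp
    have h4 : n ≤ (Ideal.span ((((Finset.range n).erase i).image x : Finset S) : Set S)).spanFinrank := by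
      exact_mod_cast h1
    have : (Ideal.span ((((Finset.range n).erase i).image x : Finset S) : Set S)).spanFinrank ≤ _ := h2
    omega


theorem aux_mvps_dim (R : Type) [CommRing R] (n : ℕ) :
    ringKrullDim R + n ≤ ringKrullDim (MvPowerSeries (Fin n) R) := by
  induction n with
  | zero =>
    simp only [Nat.cast_zero, add_zero]
    exact (ringKrullDim_eq_of_ringEquiv (MvPowerSeries.isEmptyEquiv (σ := Fin 0) (R := R)).toRingEquiv).ge
  | succ n ih =>
    rw [ringKrullDim_eq_of_ringEquiv (MvPowerSeries.finSuccEquiv R n).toRingEquiv]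
    refine le_trans ?_ ringKrullDim_succ_le_ringKrullDim_powerseries
    push_cast
    rw [← add_assoc]
    exact add_le_add_left ih 1

/-- A series of order at least `k` is in the `k`-th power of the ideal of variables. -/
theorem aux_mvps_order (R : Type) [CommRing R] (n k : ℕ) :
    ∀ (f : MvPowerSeries (Fin n) R), (∀ d : Fin n →₀ ℕ, d.degree < k → f.coeff d = 0) →
      f ∈ (Ideal.span (Set.range (MvPowerSeries.X : Fin n → MvPowerSeries (Fin n) R))) ^ k := by
  classical
  induction k with
  | zero => intro f _; simp
  | succ k ih =>
    intro f hf
    have hch : ∀ d : Fin n →₀ ℕ, ∃ i : Option (Fin n), d ≠ 0 → ∃ i', i = some i' ∧ d i' ≠ 0 := by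
      intro d
      by_cases hd : d = 0
      · exact ⟨none, fun h => absurd hd h⟩
      · obtain ⟨i, hi⟩ := Finsupp.ne_iff.1 hd
        exact ⟨some i, fun _ => ⟨i, rfl, by simpa using hi⟩⟩
    choose c hc using hch
    let g : Fin n → MvPowerSeries (Fin n) R := fun i e =>
      if c (e + Finsupp.single i 1) = some i then f.coeff (e + Finsupp.single i 1) else 0
    have hg : ∀ i e, (g i).coeff e =
      if c (e + Finsupp.single i 1) = some i then f.coeff (e + Finsupp.single i 1) else 0 :=
      fun i e => rfl
    have hfg : f = ∑ i, MvPowerSeries.X i * g i := by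
      ext d
      rw [map_sum]
      have : ∀ i, (MvPowerSeries.X i * g i).coeff d =
          if c d = some i ∧ d i ≠ 0 then f.coeff d else 0 := by
        intro i
        rw [MvPowerSeries.X, MvPowerSeries.coeff_monomial_mul]
        by_cases hi : Finsupp.single i 1 ≤ d
        · have h1 : d - Finsupp.single i 1 + Finsupp.single i 1 = d := tsub_add_cancel_of_le hi
          have h2 : d i ≠ 0 := by
            have := hi i; simp at this; omega
          rw [if_pos hi, hg, h1]; simp [h2]
        · have h2 : d i = 0 := by
            by_contra h
            apply hi
            rw [Finsupp.single_le_iff]; omega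
          rw [if_neg hi]; simp [h2]
      simp_rw [this]
      by_cases hd : d = 0
      · subst hd
        simp
        have := hf 0 (by simp)
        simpa using this
      · obtain ⟨i, hi, hdi⟩ := hc d hd
        rw [Finset.sum_eq_single i]
        · simp [hi, hdi]
        · intro j _ hj
          rw [if_neg]
          rintro ⟨h1, _⟩
          rw [hi] at h1
          exact hj (Option.some.inj h1).symm
        · simp
    rw [hfg, pow_succ']
    refine Ideal.sum_mem _ fun i _ => Ideal.mul_mem_mul (Ideal.subset_span ⟨i, rfl⟩) (ih _ ?_)
    intro d hd
    rw [hg]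
    split_ifs
    · apply hf
      simp; omega
    · rfl

theorem aux_completion (R : Type) [CommRing R] [IsLocalRing R] [IsNoetherianRing R]
    (s : Finset R) (hs : Ideal.span (s : Set R) = IsLocalRing.maximalIdeal R)
    (n : ℕ) (hcard : s.card = n) (hdim : ringKrullDim R = n) :
    ∃ (T : Type) (_ : CommRing T) (_ : IsDomain T) (_ : IsNoetherianRing T) (_ : IsLocalRing T)
      (φ : R →+* T),
      (∀ (I : Ideal R) (k : ℕ) (r : R), φ r ∈ I.map φ ⊔ IsLocalRing.maximalIdeal T ^ k →
        r ∈ I ⊔ IsLocalRing.maximalIdeal R ^ k) ∧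
      (IsLocalRing.maximalIdeal R).map φ = IsLocalRing.maximalIdeal T ∧
      (∀ f : ℕ → R, (∀ k, f (k + 1) - f k ∈ IsLocalRing.maximalIdeal R ^ k) →
        ∃ F : T, ∀ k, F - φ (f k) ∈ IsLocalRing.maximalIdeal T ^ k) := by
  classical
  let e := s.equivFinOfCardEq hcard
  let x : Fin n → R := fun i => (e.symm i : R)
  have hx : Ideal.span (Set.range x) = IsLocalRing.maximalIdeal R := by
    rw [← hs]
    refine congrArg Ideal.span ?_
    ext y
    constructor
    · rintro ⟨i, rfl⟩; exact (e.symm i).2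
    · intro hy; exact ⟨e ⟨y, hy⟩, by simp [x]⟩
  have hxm : ∀ i, x i ∈ IsLocalRing.maximalIdeal R := fun i => by
    rw [← hx]; exact Ideal.subset_span ⟨i, rfl⟩
  let S := MvPowerSeries (Fin n) R
  let g : Fin n → S := fun i => MvPowerSeries.X i - MvPowerSeries.C (x i)
  let gs : Finset S := Finset.univ.image g
  let 𝔞 : Ideal S := Ideal.span (gs : Set S)
  have hmS : ∀ f : S, f ∈ IsLocalRing.maximalIdeal S ↔
      MvPowerSeries.constantCoeff f ∈ IsLocalRing.maximalIdeal R := by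
    intro f
    rw [IsLocalRing.mem_maximalIdeal, IsLocalRing.mem_maximalIdeal, mem_nonunits_iff,
      mem_nonunits_iff, MvPowerSeries.isUnit_iff_constantCoeff]
  have hgm : (gs : Set S) ⊆ IsLocalRing.maximalIdeal S := by
    intro y hy
    simp only [gs, Finset.coe_image] at hy
    obtain ⟨i, -, rfl⟩ := hy
    change g i ∈ IsLocalRing.maximalIdeal S
    rw [hmS]
    simp only [g, map_sub, MvPowerSeries.constantCoeff_X, MvPowerSeries.constantCoeff_C, zero_sub]
    exact (Ideal.neg_mem_iff _).2 (hxm i)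
  have hale : 𝔞 ≤ IsLocalRing.maximalIdeal S := Ideal.span_le.2 hgm
  have hane : 𝔞 ≠ ⊤ := ne_top_of_le_ne_top (IsLocalRing.maximalIdeal.isMaximal S).ne_top hale
  let T := S ⧸ 𝔞
  have hTloc : IsLocalRing T := aux_quot_local 𝔞 hane
  let q : S →+* T := Ideal.Quotient.mk 𝔞
  let φ : R →+* T := q.comp MvPowerSeries.C
  have hqX : ∀ i, q (MvPowerSeries.X i) = φ (x i) := by
    intro i
    change q (MvPowerSeries.X i) = q (MvPowerSeries.C (x i))
    rw [← sub_eq_zero, ← map_sub]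
    exact Ideal.Quotient.eq_zero_iff_mem.2 (Ideal.subset_span (by simp [gs, g]))
  have hmax : IsLocalRing.maximalIdeal S = 𝔞 ⊔ Ideal.span (Set.range fun i => MvPowerSeries.C (x i)) := by
    apply le_antisymm
    · intro f hf
      rw [hmS] at hf
      have hX : f - MvPowerSeries.C (MvPowerSeries.constantCoeff f) ∈
          (Ideal.span (Set.range (MvPowerSeries.X : Fin n → MvPowerSeries (Fin n) R))) ^ 1 := by
        apply aux_mvps_order
        intro d hd
        have hd0 : d = 0 := by
          have : d.degree = 0 := by omega
          exact (Finsupp.degree_eq_zero_iff d).1 this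
        subst hd0
        simp
      rw [pow_one] at hX
      have h1 : f = (f - MvPowerSeries.C (MvPowerSeries.constantCoeff f)) +
          MvPowerSeries.C (MvPowerSeries.constantCoeff f) := by ring
      rw [h1]
      apply Ideal.add_mem
      · refine (Ideal.span_le.2 ?_) hX
        rintro _ ⟨i, rfl⟩
        have : (MvPowerSeries.X i : S) = g i + MvPowerSeries.C (x i) := by simp [g]
        rw [this]
        exact Ideal.add_mem _ (Ideal.mem_sup_left (Ideal.subset_span (by simp [gs])))
          (Ideal.mem_sup_right (Ideal.subset_span ⟨i, rfl⟩))
      · apply Ideal.mem_sup_right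
        have := Ideal.mem_map_of_mem (MvPowerSeries.C : R →+* S) hf
        rw [← hx, Ideal.map_span] at this
        rw [Set.range_comp' MvPowerSeries.C x]
        exact this
    · rw [sup_le_iff]
      refine ⟨hale, ?_⟩
      rw [Ideal.span_le]
      rintro _ ⟨i, rfl⟩
      change _ ∈ IsLocalRing.maximalIdeal S
      rw [hmS]; simpa using! hxm i
  have hgen := aux_quot_gens 𝔞 _ hmax
  have hmapm : (IsLocalRing.maximalIdeal R).map φ = IsLocalRing.maximalIdeal T := by
    rw [← hgen, ← hx, Ideal.map_span, ← Set.range_comp, ← Set.range_comp]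
    rfl
  have hTdom : IsDomain T := by
    refine aux_regular_domain n T (Finset.univ.image (fun i => φ (x i))) ?_ ?_ ?_
    · rw [← hmapm, ← hx, Ideal.map_span, ← Set.range_comp]
      simp [Function.comp_def]
    · refine Finset.card_image_le.trans ?_; simp
    · have h1 := ringKrullDim_le_ringKrullDim_quotient_add_card (R := S) gs
        (by rw [IsLocalRing.ringJacobson_eq_maximalIdeal]; exact hgm)
      have h2 : ((gs.card : ℕ) : WithBot ℕ∞) ≤ (n : WithBot ℕ∞) := by
        have : gs.card ≤ n := by
          simpa using Finset.card_image_le (s := Finset.univ) (f := g)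
        exact_mod_cast this
      have h3 := (aux_mvps_dim R n).trans (h1.trans (add_le_add_right h2 _))
      rw [hdim] at h3
      apply aux_nat_cancel n n
      push_cast
      exact h3
  refine ⟨T, inferInstance, hTdom, inferInstance, hTloc, φ, ?_, hmapm, ?_⟩
  · intro I k r hr
    -- the evaluation map to R / m^k
    let ev : MvPolynomial (Fin n) R →+* R ⧸ (IsLocalRing.maximalIdeal R ^ k) :=
      (Ideal.Quotient.mk _).comp (MvPolynomial.eval x)
    have hev : ∀ p ∈ MvPolynomial.idealOfVars (Fin n) R ^ k, ev p = 0 := by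
      intro p hp
      simp only [ev, RingHom.comp_apply]
      rw [Ideal.Quotient.eq_zero_iff_mem]
      have h1 := Ideal.mem_map_of_mem (MvPolynomial.eval x) hp
      rw [Ideal.map_pow] at h1
      refine Ideal.pow_right_mono ?_ k h1
      rw [Ideal.map_le_iff_le_comap, MvPolynomial.idealOfVars, Ideal.span_le]
      rintro _ ⟨i, rfl⟩
      simpa using! hxm i
    let ev2 := Ideal.Quotient.lift _ ev hev
    let ev3 : S →+* R ⧸ (IsLocalRing.maximalIdeal R ^ k) :=
      ev2.comp (MvPowerSeries.truncTotalAlgHom (Fin n) R k : S →+* _)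
    have hev3 : ∀ p : MvPolynomial (Fin n) R, ev3 (p : S) = ev p := by
      intro p
      have := (MvPowerSeries.truncTotalAlgHom (Fin n) R k).commutes p
      change ev2 (MvPowerSeries.truncTotalAlgHom (Fin n) R k (p : S)) = _
      have h2 : (algebraMap (MvPolynomial (Fin n) R) (MvPowerSeries (Fin n) R)) p = (p : S) := rfl
      rw [h2] at this
      rw [this]
      rfl
    have hev3C : ∀ r : R, ev3 (MvPowerSeries.C r) = Ideal.Quotient.mk _ r := by
      intro r
      have := hev3 (MvPolynomial.C r)
      rw [MvPolynomial.coe_C] at this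
      rw [this]; simp [ev]
    have hev3X : ∀ i, ev3 (MvPowerSeries.X i) = Ideal.Quotient.mk _ (x i) := by
      intro i
      have := hev3 (MvPolynomial.X i)
      rw [MvPolynomial.coe_X] at this
      rw [this]; simp [ev]
    have hker : ∀ a ∈ 𝔞, ev3 a = 0 := by
      intro a ha
      have : 𝔞 ≤ RingHom.ker ev3 := by
        refine Ideal.span_le.2 ?_
        intro y hy
        simp only [gs, Finset.coe_image] at hy
        obtain ⟨i, -, rfl⟩ := hy
        simp only [SetLike.mem_coe, RingHom.mem_ker, g, map_sub, hev3C, hev3X, sub_self]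
      exact this ha
    let ev4 : T →+* R ⧸ (IsLocalRing.maximalIdeal R ^ k) := Ideal.Quotient.lift 𝔞 ev3 hker
    have hev4 : ∀ r, ev4 (φ r) = Ideal.Quotient.mk _ r := fun r => hev3C r
    have hcomp : ev4.comp φ = Ideal.Quotient.mk _ := RingHom.ext hev4
    have h1 := Ideal.mem_map_of_mem ev4 hr
    rw [hev4, Ideal.map_sup, Ideal.map_pow, ← hmapm, Ideal.map_map, Ideal.map_map, hcomp,
      ← Ideal.map_pow, Ideal.map_quotient_self, sup_bot_eq] at h1
    rw [Ideal.mem_map_iff_of_surjective _ Ideal.Quotient.mk_surjective] at h1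
    obtain ⟨y, hy, hyr⟩ := h1
    have h2 := Ideal.Quotient.eq.1 hyr.symm
    have : r = y + (r - y) := by ring
    rw [this]
    exact Ideal.add_mem _ (Ideal.mem_sup_left hy) (Ideal.mem_sup_right h2)
  · intro f hf
    have hsurj : Function.Surjective (MvPolynomial.eval x) := fun r => ⟨MvPolynomial.C r, by simp⟩
    have hh : ∀ k, ∃ h ∈ MvPolynomial.idealOfVars (Fin n) R ^ k, MvPolynomial.eval x h = f (k + 1) - f k := by
      intro k
      have h1 := hf k
      have h2 : IsLocalRing.maximalIdeal R = (MvPolynomial.idealOfVars (Fin n) R).map (MvPolynomial.eval x) := by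
        rw [MvPolynomial.idealOfVars, Ideal.map_span, ← Set.range_comp, ← hx]
        congr 2
        ext i; simp
      rw [h2, ← Ideal.map_pow, Ideal.mem_map_iff_of_surjective _ hsurj] at h1
      exact h1
    choose h hh1 hh2 using hh
    let G : ℕ → MvPolynomial (Fin n) R := fun k => MvPolynomial.C (f 0) + ∑ j ∈ Finset.range k, h j
    have hG : ∀ k, MvPolynomial.eval x (G k) = f k := by
      intro k
      simp only [G, map_add, map_sum, hh2, MvPolynomial.eval_C]
      rw [Finset.sum_range_sub]; ring
    have hGc : ∀ k l d, d.degree < k → k ≤ l → (G l).coeff d = (G k).coeff d := by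
      intro k l d hd hkl
      induction l, hkl using Nat.le_induction with
      | base => rfl
      | succ l hl ih =>
        rw [← ih]
        simp only [G]
        rw [Finset.sum_range_succ, ← add_assoc, MvPolynomial.coeff_add]
        rw [(MvPolynomial.mem_pow_idealOfVars_iff' _ _).1 (hh1 l) d (by omega), add_zero]
    let F : S := fun d => (G (d.degree + 1)).coeff d
    have hF : ∀ d, F.coeff d = (G (d.degree + 1)).coeff d := fun d => rfl
    refine ⟨q F, fun k => ?_⟩
    have h1 : F - (G k : S) ∈ (Ideal.span (Set.range (MvPowerSeries.X : Fin n → MvPowerSeries (Fin n) R))) ^ k := by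
      apply aux_mvps_order
      intro d hd
      rw [map_sub, hF, MvPolynomial.coeff_coe, hGc (d.degree + 1) k d (by omega) (by omega), sub_self]
    have h2 : ∀ p : MvPolynomial (Fin n) R, q (p : S) = φ (MvPolynomial.eval x p) := by
      intro p
      have : (q.comp (MvPolynomial.coeToMvPowerSeries.ringHom : MvPolynomial (Fin n) R →+* S)) =
          φ.comp (MvPolynomial.eval x) := by
        apply MvPolynomial.ringHom_ext
        · intro r
          change q ((MvPolynomial.C r : MvPolynomial (Fin n) R) : S) = φ (MvPolynomial.eval x _)
          rw [MvPolynomial.coe_C, MvPolynomial.eval_C]; rfl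
        · intro i
          change q ((MvPolynomial.X i : MvPolynomial (Fin n) R) : S) = φ (MvPolynomial.eval x _)
          rw [MvPolynomial.coe_X, MvPolynomial.eval_X]; exact hqX i
      exact RingHom.congr_fun this p
    rw [← hG k, ← h2, ← map_sub]
    have h3 := Ideal.mem_map_of_mem q h1
    rw [Ideal.map_pow] at h3
    refine Ideal.pow_right_mono ?_ k h3
    rw [Ideal.map_le_iff_le_comap, Ideal.span_le]
    rintro _ ⟨i, rfl⟩
    change q (MvPowerSeries.X i) ∈ IsLocalRing.maximalIdeal T
    rw [hqX, ← hmapm]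
    exact Ideal.mem_map_of_mem _ (hxm i)


theorem aux_closed {T : Type} [CommRing T] [IsNoetherianRing T] [IsLocalRing T] (I : Ideal T) (x : T)
    (h : ∀ k, x ∈ I ⊔ IsLocalRing.maximalIdeal T ^ k) : x ∈ I := by
  have h1 := Ideal.iInf_pow_smul_eq_bot_of_isLocalRing (M := T ⧸ I) (IsLocalRing.maximalIdeal T)
    (IsLocalRing.maximalIdeal.isMaximal T).ne_top
  rw [← Ideal.Quotient.eq_zero_iff_mem]
  have h2 : (Ideal.Quotient.mk I x) ∈
      (⨅ i : ℕ, IsLocalRing.maximalIdeal T ^ i • (⊤ : Submodule T (T ⧸ I))) := by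
    rw [Submodule.mem_iInf]
    intro k
    obtain ⟨y, hy, z, hz, rfl⟩ := Submodule.mem_sup.1 (h k)
    rw [map_add, Ideal.Quotient.eq_zero_iff_mem.2 hy, zero_add]
    have : Ideal.Quotient.mk I z = z • (1 : T ⧸ I) := by
      rw [Algebra.smul_def, mul_one]; rfl
    rw [this]
    exact Submodule.smul_mem_smul hz trivial
  rw [h1] at h2
  exact h2

/-- The saturation of `p^s` with respect to `a`. -/
def auxSat {R : Type} [CommRing R] (p : Ideal R) (a : R) (s : ℕ) : Ideal R where
  carrier := {x | ∃ N, a ^ N * x ∈ p ^ s}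
  add_mem' := by
    rintro x y ⟨N, hN⟩ ⟨M, hM⟩
    refine ⟨N + M, ?_⟩
    have : a ^ (N + M) * (x + y) = a ^ M * (a ^ N * x) + a ^ N * (a ^ M * y) := by ring
    rw [this]
    exact Ideal.add_mem _ (Ideal.mul_mem_left _ _ hN) (Ideal.mul_mem_left _ _ hM)
  zero_mem' := ⟨0, by simp⟩
  smul_mem' := by
    rintro c x ⟨N, hN⟩
    refine ⟨N, ?_⟩
    have : a ^ N * (c • x) = c * (a ^ N * x) := by simp; ring
    rw [this]
    exact Ideal.mul_mem_left _ _ hN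

theorem auxSat_mem {R : Type} [CommRing R] (p : Ideal R) (a : R) (s : ℕ) (x : R) :
    x ∈ auxSat p a s ↔ ∃ N, a ^ N * x ∈ p ^ s := Iff.rfl

theorem auxSat_anti {R : Type} [CommRing R] (p : Ideal R) (a : R) {s t : ℕ} (h : s ≤ t) :
    auxSat p a t ≤ auxSat p a s := by
  rintro x ⟨N, hN⟩
  exact ⟨N, Ideal.pow_le_pow_right h hN⟩

theorem auxSat_unif {R : Type} [CommRing R] [IsNoetherianRing R] (p : Ideal R) (a : R) (s : ℕ) :
    ∃ N, ∀ x ∈ auxSat p a s, a ^ N * x ∈ p ^ s := by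
  classical
  obtain ⟨G, hG⟩ := (IsNoetherian.noetherian (auxSat p a s))
  have hGm : ∀ x ∈ G, ∃ N, a ^ N * x ∈ p ^ s := fun x hx => by
    have : x ∈ auxSat p a s := by rw [← hG]; exact Submodule.subset_span hx
    exact this
  choose! f hf using hGm
  refine ⟨G.sup f, fun x hx => ?_⟩
  have : auxSat p a s ≤ Submodule.comap (LinearMap.mulLeft R (a ^ (G.sup f))) (p ^ s) := by
    conv_lhs => rw [← hG]
    rw [Submodule.span_le]
    intro y hy
    have h1 : G.sup f = f y + (G.sup f - f y) := by
      have := Finset.le_sup (f := f) hy; omega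
    simp only [SetLike.mem_coe, Submodule.mem_comap, LinearMap.mulLeft_apply]
    rw [h1, pow_add, mul_comm (a ^ f y), mul_assoc]
    exact Ideal.mul_mem_left _ _ (hf y hy)
  exact this hx

theorem aux_chevalley (R : Type) [CommRing R] [IsLocalRing R] [IsNoetherianRing R]
    (s : Finset R) (hs : Ideal.span (s : Set R) = IsLocalRing.maximalIdeal R)
    (n : ℕ) (hcard : s.card = n) (hdim : ringKrullDim R = n)
    (p : Ideal R) [hp : p.IsPrime] (a : R) (ha : a ∉ p) (k₀ : ℕ) :
    ∃ t, auxSat p a t ≤ IsLocalRing.maximalIdeal R ^ k₀ := by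
  classical
  by_contra! hcon
  obtain ⟨T, _, _, _, _, φ, hφ1, hφ2, hφ3⟩ := aux_completion R s hs n hcard hdim
  set m := IsLocalRing.maximalIdeal R with hm
  set M := IsLocalRing.maximalIdeal T with hM
  set Q := auxSat p a with hQ
  -- stabilisation
  have hstab : ∀ k, ∃ σ, ∀ t, σ ≤ t → Q t ⊔ m ^ k = Q σ ⊔ m ^ k := by
    intro k
    by_cases hk : k = 0
    · subst hk; exact ⟨0, fun t _ => by simp⟩
    have : IsArtinianRing (R ⧸ m ^ k) := by
      apply IsLocalRing.quotient_artinian_of_mem_minimalPrimes_of_isLocalRing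
      refine ⟨⟨inferInstance, Ideal.pow_le_self hk⟩, ?_⟩
      rintro J ⟨hJ, hJ2⟩ _
      exact hJ.le_of_pow_le hJ2
    obtain ⟨σ, hσ⟩ := IsArtinian.monotone_stabilizes
      (⟨fun t => OrderDual.toDual ((Q t).map (Ideal.Quotient.mk (m ^ k))), fun t t' h =>
        Ideal.map_mono (auxSat_anti p a h)⟩ : ℕ →o (Submodule (R ⧸ m ^ k) (R ⧸ m ^ k))ᵒᵈ)
    refine ⟨σ, fun t ht => ?_⟩
    have h1 : (Q σ).map (Ideal.Quotient.mk (m ^ k)) = (Q t).map (Ideal.Quotient.mk (m ^ k)) := hσ t ht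
    have h2 := congrArg (Ideal.comap (Ideal.Quotient.mk (m ^ k))) h1
    rw [Ideal.comap_map_of_surjective _ Ideal.Quotient.mk_surjective,
      Ideal.comap_map_of_surjective _ Ideal.Quotient.mk_surjective] at h2
    have h3 : Ideal.comap (Ideal.Quotient.mk (m ^ k)) ⊥ = m ^ k := by
      ext z; simp [Ideal.mem_comap, Ideal.Quotient.eq_zero_iff_mem]
    rw [h3] at h2
    exact h2.symm
  choose σ hσ using hstab
  let W : ℕ → Ideal R := fun k => Q (σ k) ⊔ m ^ k
  have hWle : ∀ k t, W k ≤ Q t ⊔ m ^ k := by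
    intro k t
    rcases le_total (σ k) t with h | h
    · exact (hσ k t h).ge
    · exact sup_le_sup_right (auxSat_anti p a h) _
  have hstep : ∀ k f, f ∈ W k → ∃ f' ∈ W (k + 1), f' - f ∈ m ^ k := by
    intro k f hf
    obtain ⟨q, hq, u, hu, rfl⟩ := Submodule.mem_sup.1 (hWle k (σ (k + 1)) hf)
    refine ⟨q, Ideal.mem_sup_left hq, ?_⟩
    simpa using hu
  obtain ⟨f₀, hf₀, hf₀'⟩ := SetLike.not_le_iff_exists.1 (hcon (σ k₀))
  choose! nx hnx1 hnx2 using hstep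
  let f : ℕ → R := fun j => Nat.rec f₀ (fun j r => nx (k₀ + j) r) j
  have hfs : ∀ j, f (j + 1) = nx (k₀ + j) (f j) := fun j => rfl
  have hf0 : f 0 = f₀ := rfl
  have hfW : ∀ j, f j ∈ W (k₀ + j) := by
    intro j
    induction j with
    | zero => exact Ideal.mem_sup_left hf₀
    | succ j ih => rw [hfs]; exact hnx1 _ _ ih
  have hfd : ∀ j, f (j + 1) - f j ∈ m ^ (k₀ + j) := fun j => by
    rw [hfs]; exact hnx2 _ _ (hfW j)
  obtain ⟨F, hF⟩ := hφ3 f (fun k => Ideal.pow_le_pow_right (by omega) (hfd k))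
  have hmap : ∀ k r, r ∈ m ^ k → φ r ∈ M ^ k := fun k r hr => by
    rw [← hφ2, ← Ideal.map_pow]; exact Ideal.mem_map_of_mem _ hr
  have hF0 : F ≠ 0 := by
    intro h0
    have h1 : ∀ j, f j - f 0 ∈ m ^ k₀ := by
      intro j
      induction j with
      | zero => simp
      | succ j ih =>
        have : f (j + 1) - f 0 = (f (j + 1) - f j) + (f j - f 0) := by ring
        rw [this]
        exact Ideal.add_mem _ (Ideal.pow_le_pow_right (by omega) (hfd j)) ih
    have h2 := hF k₀
    rw [h0] at h2
    have h3 : φ (f 0) ∈ M ^ k₀ := by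
      have : φ (f 0) = - (0 - φ (f k₀)) - φ (f k₀ - f 0) := by rw [map_sub]; ring
      rw [this]
      exact Ideal.sub_mem _ ((Ideal.neg_mem_iff _).2 h2) (hmap _ _ (h1 k₀))
    have h4 := hφ1 ⊥ k₀ (f 0) (Ideal.mem_sup_right h3)
    rw [bot_sup_eq] at h4
    exact hf₀' h4
  have hkey : ∀ t, ∃ N, φ a ^ N * F ∈ (p.map φ) ^ t := by
    intro t
    obtain ⟨N, hN⟩ := auxSat_unif p a t
    refine ⟨N, aux_closed _ _ fun k => ?_⟩
    have h1 : f k ∈ Q t ⊔ m ^ (k₀ + k) := hWle _ t (hfW k)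
    obtain ⟨q, hq, u, hu, hqu⟩ := Submodule.mem_sup.1 h1
    have : φ a ^ N * F = φ (a ^ N * q) + (φ a ^ N * φ u + φ a ^ N * (F - φ (f k))) := by
      rw [← hqu]; simp only [map_mul, map_pow, map_add]; ring
    rw [this]
    refine Ideal.add_mem _ (Ideal.mem_sup_left ?_) (Ideal.mem_sup_right (Ideal.add_mem _ ?_ ?_))
    · rw [← Ideal.map_pow]; exact Ideal.mem_map_of_mem _ (hN q hq)
    · exact Ideal.mul_mem_left _ _ (hmap _ _ (Ideal.pow_le_pow_right (by omega) hu))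
    · exact Ideal.mul_mem_left _ _ (hF k)
  have hdis : Disjoint ((p.map φ : Ideal T) : Set T) (Submonoid.powers (φ a)) := by
    rw [Set.disjoint_left]
    rintro z hz ⟨N, rfl⟩
    apply ha
    apply hp.mem_of_pow_mem N
    apply aux_closed
    intro k
    apply hφ1 p k
    apply Ideal.mem_sup_left
    simpa using! hz
  obtain ⟨q, hq, hpq, hqd⟩ := Ideal.exists_le_prime_disjoint _ _ hdis
  have haq : φ a ∉ q := fun h => Set.disjoint_left.1 hqd h ⟨1, by simp⟩
  let L := Localization.AtPrime q
  have hLF : algebraMap T L F = 0 := by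
    have h1 := Ideal.iInf_pow_eq_bot_of_isLocalRing (IsLocalRing.maximalIdeal L)
      (IsLocalRing.maximalIdeal.isMaximal L).ne_top
    have h2 : algebraMap T L F ∈ (⨅ i : ℕ, IsLocalRing.maximalIdeal L ^ i) := by
      rw [Submodule.mem_iInf]
      intro t
      obtain ⟨N, hN⟩ := hkey t
      have h3 := Ideal.mem_map_of_mem (algebraMap T L) hN
      rw [Ideal.map_pow, map_mul, map_pow] at h3
      have hu : IsUnit (algebraMap T L (φ a) ^ N) :=
        (IsLocalization.map_units L (⟨φ a, haq⟩ : q.primeCompl)).pow N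
      rw [Ideal.unit_mul_mem_iff_mem _ hu] at h3
      refine Ideal.pow_right_mono ?_ t h3
      rw [← Localization.AtPrime.map_eq_maximalIdeal]
      exact Ideal.map_mono hpq
    rw [h1] at h2
    exact h2
  apply hF0
  have hinj : Function.Injective (algebraMap T L) :=
    IsLocalization.injective L q.primeCompl_le_nonZeroDivisors
  exact hinj (by rw [hLF, map_zero])


/-- unbundled Ext -/
abbrev XT (R : Type) [CommRing R] (M Y : Type) [AddCommGroup M] [Module R M]
    [AddCommGroup Y] [Module R Y] (i : ℕ) : Type :=
  Abelian.Ext (ModuleCat.of R M) (ModuleCat.of R Y) i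

section
variable {R : Type} [CommRing R] {M N P Y Y' : Type} [AddCommGroup M] [Module R M]
    [AddCommGroup N] [Module R N] [AddCommGroup P] [Module R P]
    [AddCommGroup Y] [Module R Y] [AddCommGroup Y'] [Module R Y']

/-- contravariant functoriality -/
noncomputable def xpull (Y : Type) [AddCommGroup Y] [Module R Y] (f : M →ₗ[R] N) (i : ℕ) :
    XT R N Y i →ₗ[R] XT R M Y i where
  toFun x := (Abelian.Ext.mk₀ (ModuleCat.ofHom f)).comp x (zero_add i)
  map_add' x y := by simp
  map_smul' r x := by simp [Abelian.Ext.comp_smul]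

/-- covariant functoriality -/
noncomputable def xpush (M : Type) [AddCommGroup M] [Module R M] (f : Y →ₗ[R] Y') (i : ℕ) :
    XT R M Y i →ₗ[R] XT R M Y' i where
  toFun x := x.comp (Abelian.Ext.mk₀ (ModuleCat.ofHom f)) (add_zero i)
  map_add' x y := by simp
  map_smul' r x := by simp [Abelian.Ext.smul_comp]

theorem xpull_apply (f : M →ₗ[R] N) (i : ℕ) (x : XT R N Y i) :
    xpull Y f i x = (Abelian.Ext.mk₀ (ModuleCat.ofHom f)).comp x (zero_add i) := rfl

theorem xpull_id (i : ℕ) (x : XT R N Y i) : xpull Y (LinearMap.id : N →ₗ[R] N) i x = x := by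
  rw [xpull_apply]
  exact Abelian.Ext.mk₀_id_comp _

theorem xpull_comp (f : M →ₗ[R] N) (g : N →ₗ[R] P) (i : ℕ) (x : XT R P Y i) :
    xpull Y (g ∘ₗ f) i x = xpull Y f i (xpull Y g i x) := by
  rw [xpull_apply, xpull_apply, xpull_apply, ModuleCat.ofHom_comp]
  rw [Abelian.Ext.mk₀_comp_mk₀_assoc]

theorem xpull_smul (f : M →ₗ[R] N) (r : R) (i : ℕ) (x : XT R N Y i) :
    xpull Y (r • f) i x = r • xpull Y f i x := by
  rw [xpull_apply, xpull_apply]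
  have : ModuleCat.ofHom (r • f) = r • ModuleCat.ofHom f := rfl
  rw [this, Abelian.Ext.mk₀_smul, Abelian.Ext.smul_comp]

theorem xpull_add (f g : M →ₗ[R] N) (i : ℕ) (x : XT R N Y i) :
    xpull Y (f + g) i x = xpull Y f i x + xpull Y g i x := by
  rw [xpull_apply, xpull_apply, xpull_apply]
  have : ModuleCat.ofHom (f + g) = ModuleCat.ofHom f + ModuleCat.ofHom g := rfl
  rw [this, Abelian.Ext.mk₀_add, Abelian.Ext.add_comp]

theorem xpull_zero (i : ℕ) (x : XT R N Y i) :
    xpull Y (0 : M →ₗ[R] N) i x = 0 := by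
  rw [xpull_apply]
  have : ModuleCat.ofHom (0 : M →ₗ[R] N) = 0 := rfl
  rw [this, Abelian.Ext.mk₀_zero, Abelian.Ext.zero_comp]

/-- equivalence induced -/
noncomputable def xpullEquiv (Y : Type) [AddCommGroup Y] [Module R Y] (e : M ≃ₗ[R] N) (i : ℕ) :
    XT R N Y i ≃ₗ[R] XT R M Y i :=
  LinearEquiv.ofLinearMap (xpull Y e.toLinearMap i) (xpull Y e.symm.toLinearMap i)
    (by ext x; simp [← xpull_comp, xpull_id])
    (by ext x; simp [← xpull_comp, xpull_id])

theorem xt_les (f : M →ₗ[R] N) (g : N →ₗ[R] P) (hf : Function.Injective f)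
    (hg : Function.Surjective g) (h : Function.Exact f g) (Y : Type) [AddCommGroup Y] [Module R Y] :
    (∀ i, Function.Exact (xpull Y g i) (xpull Y f i)) ∧ Function.Injective (xpull Y g 0) ∧
    ∀ i, ∃ δ : XT R M Y i →ₗ[R] XT R P Y (i+1), Function.Exact (xpull Y f i) δ ∧
      Function.Exact δ (xpull Y g (i+1)) := by
  let S : ShortComplex (ModuleCat R) := ModuleCat.shortComplexOfCompEqZero f g h.linearMap_comp_eq_zero
  have hS : S.ShortExact :=
    { exact := ModuleCat.shortComplex_exact _ h
      mono_f := by rw [ModuleCat.mono_iff_injective]; exact hf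
      epi_g := by rw [ModuleCat.epi_iff_surjective]; exact hg }
  have hgf (i) (z : XT R P Y i) : xpull Y f i (xpull Y g i z) = 0 := by
    rw [← xpull_comp, h.linearMap_comp_eq_zero, xpull_zero]
  refine ⟨fun i x => ⟨fun hx => ?_, ?_⟩, ?_, fun i => ?_⟩
  · exact Abelian.Ext.contravariant_sequence_exact₂ hS _ x hx
  · rintro ⟨z, rfl⟩; exact hgf i z
  · have : Epi (ModuleCat.ofHom g) := by rw [ModuleCat.epi_iff_surjective]; exact hg
    exact Abelian.Ext.precomp_mk₀_injective_of_epi (ModuleCat.of R Y) (ModuleCat.ofHom g)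
  · refine ⟨{ toFun := fun x => hS.extClass.comp x (add_comm 1 i), map_add' := by simp,
              map_smul' := by intro r x; simp [Abelian.Ext.comp_smul] }, ?_, ?_⟩
    · intro x
      refine ⟨fun hx => Abelian.Ext.contravariant_sequence_exact₁ hS _ x (add_comm 1 i) hx, ?_⟩
      rintro ⟨z, rfl⟩
      exact ShortComplex.ShortExact.extClass_comp_assoc hS _ (h := add_comm 1 i)
    · intro x
      refine ⟨fun hx => Abelian.Ext.contravariant_sequence_exact₃ hS _ x hx (add_comm 1 i), ?_⟩
      rintro ⟨z, rfl⟩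
      exact ShortComplex.ShortExact.comp_extClass_assoc hS _ (add_comm 1 i)

/-- covariant sequence: with connecting class -/
theorem xt_cov (f : M →ₗ[R] N) (g : N →ₗ[R] P) (hf : Function.Injective f)
    (hg : Function.Surjective g) (h : Function.Exact f g) :
    ∃ δ : XT R P M 1, 
     (∀ (X : Type) [AddCommGroup X] [Module R X] (i : ℕ), 
      Function.Exact (xpush X g i) (fun x : XT R X P i => (x.comp δ rfl : XT R X M (i+1))) ∧
      Function.Exact (fun x : XT R X P i => (x.comp δ rfl : XT R X M (i+1))) (xpush X f (i+1))) := by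
  let S : ShortComplex (ModuleCat R) := ModuleCat.shortComplexOfCompEqZero f g h.linearMap_comp_eq_zero
  have hS : S.ShortExact :=
    { exact := ModuleCat.shortComplex_exact _ h
      mono_f := by rw [ModuleCat.mono_iff_injective]; exact hf
      epi_g := by rw [ModuleCat.epi_iff_surjective]; exact hg }
  refine ⟨hS.extClass, fun X _ _ i => ⟨fun x => ⟨fun hx => ?_, ?_⟩, fun x => ⟨fun hx => ?_, ?_⟩⟩⟩
  · exact Abelian.Ext.covariant_sequence_exact₃ _ hS x rfl hx
  · rintro ⟨z, rfl⟩
    change Abelian.Ext.comp (Abelian.Ext.comp z (Abelian.Ext.mk₀ S.g) (add_zero i)) hS.extClass rfl = 0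
    rw [Abelian.Ext.comp_assoc (h := by omega) (h₂₃ := zero_add 1), ShortComplex.ShortExact.comp_extClass, Abelian.Ext.comp_zero]
  · exact Abelian.Ext.covariant_sequence_exact₁ _ hS x hx rfl
  · rintro ⟨z, rfl⟩
    change Abelian.Ext.comp (Abelian.Ext.comp z hS.extClass rfl) (Abelian.Ext.mk₀ S.f) (add_zero (i+1)) = 0
    rw [Abelian.Ext.comp_assoc (h := by omega) (h₂₃ := add_zero 1), ShortComplex.ShortExact.extClass_comp, Abelian.Ext.comp_zero]

theorem xt_injective [Module.Injective R Y] (i : ℕ) : Subsingleton (XT R M Y (i+1)) := by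
  have : CategoryTheory.Injective (ModuleCat.of R Y) := 
    (Module.injective_iff_injective_object R Y).1 inferInstance
  exact subsingleton_of_forall_eq 0 fun x => Abelian.Ext.eq_zero_of_injective x
end


section
variable {R : Type} [CommRing R] {M N P Y Y' : Type} [AddCommGroup M] [Module R M]
    [AddCommGroup N] [Module R N] [AddCommGroup P] [Module R P]
    [AddCommGroup Y] [Module R Y] [AddCommGroup Y'] [Module R Y']

theorem xpull_lsmul (r : R) (i : ℕ) (x : XT R N Y i) :
    xpull Y (LinearMap.lsmul R N r) i x = r • x := by
  have : LinearMap.lsmul R N r = r • LinearMap.id := by ext; simp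
  rw [this, xpull_smul, xpull_id]

/-- exact in the middle with zero ends -/
theorem xt_mid (f : M →ₗ[R] N) (g : N →ₗ[R] P) (hf : Function.Injective f)
    (hg : Function.Surjective g) (h : Function.Exact f g) (i : ℕ)
    (h1 : Subsingleton (XT R M Y i)) (h2 : Subsingleton (XT R P Y i)) : Subsingleton (XT R N Y i) := by
  refine subsingleton_of_forall_eq 0 fun x => ?_
  obtain ⟨y, rfl⟩ := ((xt_les f g hf hg h Y).1 i x).1 (Subsingleton.elim _ _)
  rw [Subsingleton.elim y 0, map_zero]

/-- shifted: vanishing of Ext of the quotient. -/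
theorem xt_quot (f : M →ₗ[R] N) (g : N →ₗ[R] P) (hf : Function.Injective f)
    (hg : Function.Surjective g) (h : Function.Exact f g) (i : ℕ)
    (h1 : ∀ j, j + 1 = i → Subsingleton (XT R M Y j)) (h2 : Subsingleton (XT R N Y i)) :
    Subsingleton (XT R P Y i) := by
  obtain ⟨e1, e2, e3⟩ := xt_les f g hf hg h Y
  refine subsingleton_of_forall_eq 0 fun x => ?_
  cases i with
  | zero => exact e2 (Subsingleton.elim _ _)
  | succ i =>
    obtain ⟨δ, d1, d2⟩ := e3 i
    obtain ⟨y, rfl⟩ := (d2 x).1 (Subsingleton.elim _ _)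
    have := h1 i rfl
    rw [Subsingleton.elim y 0, map_zero]

theorem xt_step (x : R) (hx : Function.Injective (LinearMap.lsmul R N x)) (g : N →ₗ[R] P)
    (hg : Function.Surjective g) (h : Function.Exact (LinearMap.lsmul R N x) g) (j : ℕ)
    (hz : ∀ i, i ≠ j → Subsingleton (XT R N Y i)) (e : Nonempty (XT R N Y j ≃ₗ[R] N)) :
    (∀ i, i ≠ j + 1 → Subsingleton (XT R P Y i)) ∧ Nonempty (XT R P Y (j+1) ≃ₗ[R] P) := by
  obtain ⟨e⟩ := e
  have les := xt_les _ g hx hg h Y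
  constructor
  · intro i hi
    by_cases hij : i = j
    · subst hij
      refine subsingleton_of_forall_eq 0 fun z => ?_
      have hz0 : xpull Y g i z = 0 := by
        apply e.injective
        apply hx
        rw [map_zero, map_zero, LinearMap.lsmul_apply, ← map_smul, ← xpull_lsmul, (les.1 i).apply_apply_eq_zero, map_zero]
      cases i with
      | zero => exact les.2.1 (by rw [hz0, map_zero])
      | succ i =>
        obtain ⟨δ, d1, d2⟩ := les.2.2 i
        obtain ⟨y, rfl⟩ := (d2 z).1 hz0
        have := hz i (by omega)
        rw [Subsingleton.elim y 0, map_zero]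
    · exact xt_quot _ g hx hg h i (fun k hk => hz k (by omega)) (hz i hij)
  · obtain ⟨δ, d1, d2⟩ := les.2.2 j
    have hδ : Function.Surjective δ := fun z => by
      have := hz (j+1) (by omega)
      exact (d2 z).1 (Subsingleton.elim _ _)
    have k1 : LinearMap.ker δ = LinearMap.ker (g ∘ₗ e.toLinearMap) := by
      ext z
      rw [LinearMap.mem_ker, LinearMap.mem_ker, d1 z]
      simp only [LinearMap.comp_apply, LinearEquiv.coe_coe]
      rw [h (e z)]
      constructor
      · rintro ⟨w, rfl⟩
        rw [xpull_lsmul]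
        exact ⟨e w, by simp⟩
      · rintro ⟨w, hw⟩
        refine ⟨e.symm w, ?_⟩
        rw [xpull_lsmul]
        apply e.injective
        simpa using hw
    exact ⟨(δ.quotKerEquivOfSurjective hδ).symm ≪≫ₗ Submodule.quotEquivOfEq _ _ k1 ≪≫ₗ
      (LinearMap.quotKerEquivOfSurjective (g ∘ₗ e.toLinearMap) (hg.comp e.surjective))⟩

theorem xt_self (i : ℕ) (hi : i ≠ 0) : Subsingleton (XT R R Y i) := by
  obtain ⟨i, rfl⟩ := Nat.exists_eq_succ_of_ne_zero hi
  have : CategoryTheory.Projective (ModuleCat.of R R) :=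
    ModuleCat.projective_of_categoryTheory_projective _
  exact subsingleton_of_forall_eq 0 fun x => Abelian.Ext.eq_zero_of_projective x
end

/-- vanishing and value of Ext of the residue field -/
theorem xt_residue (R : Type) [CommRing R] [IsLocalRing R] [IsNoetherianRing R] (s : Finset R)
    (hs : Ideal.span (s:Set R) = IsLocalRing.maximalIdeal R) (n : ℕ) (hcard : s.card = n)
    (hdim : ringKrullDim R = n) :
    (∀ i, i ≠ n → Subsingleton (XT R (R ⧸ IsLocalRing.maximalIdeal R) R i)) ∧
    Nonempty (XT R (R ⧸ IsLocalRing.maximalIdeal R) R n ≃ₗ[R] (R ⧸ IsLocalRing.maximalIdeal R)) := by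
  obtain ⟨J, x, h0, hn, hJ⟩ := aux_regular_chain R s hs n hcard hdim
  have key : ∀ j ≤ n, (∀ i, i ≠ j → Subsingleton (XT R (R ⧸ J j) R i)) ∧
      Nonempty (XT R (R ⧸ J j) R j ≃ₗ[R] (R ⧸ J j)) := by
    intro j
    induction j with
    | zero =>
      intro _
      have e : (R ⧸ J 0) ≃ₗ[R] R := Submodule.quotEquivOfEqBot _ h0
      refine ⟨fun i hi => ?_, ⟨?_⟩⟩
      · have := xt_self (R := R) (Y := R) i hi
        exact (xpullEquiv R e i).symm.toEquiv.subsingleton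
      · refine (xpullEquiv R e 0).symm ≪≫ₗ ?_ ≪≫ₗ e.symm
        exact Abelian.Ext.linearEquiv₀ (R := R) ≪≫ₗ ModuleCat.homLinearEquiv (S := R) ≪≫ₗ
          LinearMap.ringLmapEquivSelf R R R
    | succ j ih =>
      intro hj
      obtain ⟨i1, i2⟩ := ih (by omega)
      obtain ⟨hp, hx, hJe⟩ := hJ j (by omega)
      have hle : J j ≤ J (j+1) := by rw [hJe]; exact le_sup_left
      refine xt_step (x j) ?_ (Submodule.factor hle) (Submodule.factor_surjective hle) ?_ j i1 i2
      · rw [← LinearMap.ker_eq_bot, LinearMap.ker_eq_bot']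
        intro m hm
        obtain ⟨m, rfl⟩ := Ideal.Quotient.mk_surjective m
        have : Ideal.Quotient.mk (J j) (x j * m) = 0 := by
          rw [← hm]; rfl
        rw [Ideal.Quotient.eq_zero_iff_mem] at this ⊢
        exact (hp.mem_or_mem this).resolve_left hx
      · intro m
        obtain ⟨m, rfl⟩ := Ideal.Quotient.mk_surjective m
        have : Submodule.factor hle (Ideal.Quotient.mk (J j) m) = Ideal.Quotient.mk (J (j+1)) m := rfl
        rw [this, Ideal.Quotient.eq_zero_iff_mem, hJe, Submodule.mem_sup]
        constructor
        · rintro ⟨y, hy, z, hz, rfl⟩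
          obtain ⟨c, rfl⟩ := Ideal.mem_span_singleton'.1 hz
          refine ⟨Ideal.Quotient.mk _ c, ?_⟩
          change Ideal.Quotient.mk (J j) (x j * c) = _
          rw [Ideal.Quotient.eq]
          have : x j * c - (y + c * x j) = - y := by ring
          rw [this]; exact neg_mem hy
        · rintro ⟨c, hc⟩
          obtain ⟨c, rfl⟩ := Ideal.Quotient.mk_surjective c
          have hc : Ideal.Quotient.mk (J j) (x j * c) = _ := hc
          rw [Ideal.Quotient.eq] at hc
          refine ⟨m - x j * c, ?_, x j * c, Ideal.mem_span_singleton'.2 ⟨c, by ring⟩, by ring⟩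
          rw [← neg_mem_iff]; convert hc using 1; ring
  have := key n le_rfl
  rw [hn] at this
  exact this


section
variable {R : Type} [CommRing R] [IsLocalRing R]

theorem aux_simple_equiv (M : Type) [AddCommGroup M] [Module R M] [IsSimpleModule R M] :
    Nonempty (M ≃ₗ[R] (R ⧸ IsLocalRing.maximalIdeal R)) := by
  obtain ⟨I, hI, ⟨e⟩⟩ := (isSimpleModule_iff_quot_maximal (R := R) (M := M)).1 inferInstance
  have := IsLocalRing.eq_maximalIdeal hI
  subst this
  exact ⟨e⟩

theorem xt_finlen (n : ℕ)
    (h0 : ∀ i, i ≠ n → Subsingleton (XT R (R ⧸ IsLocalRing.maximalIdeal R) R i))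
    (h1 : Nonempty (XT R (R ⧸ IsLocalRing.maximalIdeal R) R n ≃ₗ[R] (R ⧸ IsLocalRing.maximalIdeal R)))
    (N : Type) [AddCommGroup N] [Module R N] (hN : IsFiniteLength R N) :
    (∀ i, i ≠ n → Subsingleton (XT R N R i)) ∧ 
      Module.length R (XT R N R n) = Module.length R N := by
  induction hN with
  | @of_subsingleton M _ _ _ => 
    have (i : ℕ) : Subsingleton (XT R M R i) := by
      refine subsingleton_of_forall_eq 0 fun x => ?_
      rw [← xpull_id i x, Subsingleton.elim (LinearMap.id : M →ₗ[R] M) 0, xpull_zero]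
    exact ⟨fun i _ => this i, by rw [Module.length_eq_zero, Module.length_eq_zero]⟩
  | @of_simple_quotient M _ _ N _ _ ih =>
    obtain ⟨e⟩ := aux_simple_equiv (R := R) (M ⧸ N)
    obtain ⟨h1⟩ := h1
    have q0 : ∀ i, i ≠ n → Subsingleton (XT R (M ⧸ N) R i) := fun i hi => by
      have := h0 i hi
      exact (xpullEquiv R e i).symm.toEquiv.subsingleton
    have ql : Module.length R (XT R (M ⧸ N) R n) = Module.length R (M ⧸ N) :=
      ((xpullEquiv R e n).symm ≪≫ₗ h1 ≪≫ₗ e.symm).length_eq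
    have les := xt_les N.subtype N.mkQ N.injective_subtype N.mkQ_surjective (LinearMap.exact_subtype_mkQ N) R
    refine ⟨fun i hi => xt_mid _ _ N.injective_subtype N.mkQ_surjective (LinearMap.exact_subtype_mkQ N) i (ih.1 i hi) (q0 i hi), ?_⟩
    have inj : Function.Injective (xpull R N.mkQ n) := by
      cases n with
      | zero => exact les.2.1
      | succ n =>
        obtain ⟨δ, d1, d2⟩ := les.2.2 n
        rw [← LinearMap.ker_eq_bot, LinearMap.ker_eq_bot']
        intro z hz
        obtain ⟨y, rfl⟩ := (d2 z).1 hz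
        have := ih.1 n (by omega)
        rw [Subsingleton.elim y 0, map_zero]
    have sur : Function.Surjective (xpull R N.subtype n) := by
      obtain ⟨δ, d1, d2⟩ := les.2.2 n
      intro z
      have := q0 (n+1) (by omega)
      exact (d1 z).1 (Subsingleton.elim _ _)
    rw [Module.length_eq_add_of_exact _ _ inj sur (les.1 n), ql, ih.2,
      Module.length_eq_add_of_exact N.subtype N.mkQ N.injective_subtype N.mkQ_surjective (LinearMap.exact_subtype_mkQ N), add_comm]
end

section
variable {R : Type} [CommRing R] [IsLocalRing R] [IsNoetherianRing R]

/-- finite length criterion -/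
theorem aux_finlen_of_pow (M : Type) [AddCommGroup M] [Module R M] [Module.Finite R M] (t : ℕ)
    (h : ∀ r ∈ (IsLocalRing.maximalIdeal R)^t, ∀ m : M, r • m = 0) : IsFiniteLength R M := by
  rw [isFiniteLength_iff_isNoetherian_isArtinian]
  refine ⟨isNoetherian_of_isNoetherianRing_of_finite R M, ?_⟩
  have hM : Module.IsTorsionBySet R M ((IsLocalRing.maximalIdeal R)^t : Ideal R) := 
    fun m r => h r.1 r.2 m
  let _ := hM.module
  by_cases ht : t = 0
  · subst ht
    have : Subsingleton M := subsingleton_of_forall_eq 0 fun m => by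
      simpa using h 1 (by simp) m
    infer_instance
  have hle : (IsLocalRing.maximalIdeal R)^t ≤ IsLocalRing.maximalIdeal R := Ideal.pow_le_self ht
  have : Nontrivial (R ⧸ (IsLocalRing.maximalIdeal R)^t) := 
    Ideal.Quotient.nontrivial_iff.2 (fun h => (IsLocalRing.maximalIdeal.isMaximal R).ne_top (top_le_iff.1 (h ▸ hle)))
  have : IsLocalRing (R ⧸ (IsLocalRing.maximalIdeal R)^t) := 
    .of_surjective' (Ideal.Quotient.mk _) Ideal.Quotient.mk_surjective
  have : IsArtinianRing (R ⧸ (IsLocalRing.maximalIdeal R)^t) := by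
    apply IsLocalRing.quotient_artinian_of_mem_minimalPrimes_of_isLocalRing
    refine ⟨⟨inferInstance, hle⟩, fun q hq _ => ?_⟩
    exact (hq.1.pow_le_iff ht).1 hq.2
  have : Module.Finite (R ⧸ (IsLocalRing.maximalIdeal R)^t) M := Module.Finite.of_restrictScalars_finite R _ M
  have : IsArtinian (R ⧸ (IsLocalRing.maximalIdeal R)^t) M := inferInstance
  exact isArtinian_of_surjective_algebraMap (R := (R ⧸ (IsLocalRing.maximalIdeal R)^t)) Ideal.Quotient.mk_surjective

end

section
variable {R : Type} [CommRing R]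
/-- p-power torsion modules -/
def PT (p : Ideal R) (M : Type) [AddCommGroup M] [Module R M] : Prop :=
  ∀ m : M, ∃ t : ℕ, ∀ r ∈ p ^ t, r • m = 0

theorem PT.of_injective {p : Ideal R} {M N : Type} [AddCommGroup M] [Module R M] [AddCommGroup N] [Module R N]
    (f : M →ₗ[R] N) (hf : Function.Injective f) (h : PT p N) : PT p M := fun m => by
  obtain ⟨t, ht⟩ := h (f m)
  exact ⟨t, fun r hr => hf (by rw [map_smul, ht r hr, map_zero])⟩

theorem PT.of_surjective {p : Ideal R} {M N : Type} [AddCommGroup M] [Module R M] [AddCommGroup N] [Module R N]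
    (f : M →ₗ[R] N) (hf : Function.Surjective f) (h : PT p M) : PT p N := fun m => by
  obtain ⟨m, rfl⟩ := hf m
  obtain ⟨t, ht⟩ := h m
  exact ⟨t, fun r hr => by rw [← map_smul, ht r hr, map_zero]⟩

theorem PT.uniform {p : Ideal R} {M : Type} [AddCommGroup M] [Module R M] [Module.Finite R M] (h : PT p M) :
    ∃ t : ℕ, ∀ m : M, ∀ r ∈ p ^ t, r • m = 0 := by
  choose T hT using h
  obtain ⟨s, hs⟩ := Module.Finite.fg_top (R := R) (M := M)
  refine ⟨s.sup T, fun m => ?_⟩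
  have hm : m ∈ Submodule.span R (s : Set M) := by rw [hs]; trivial
  induction hm using Submodule.span_induction with
  | mem x hx => exact fun r hr => hT x r (Ideal.pow_le_pow_right (Finset.le_sup (f := T) hx) hr)
  | zero => intros; simp
  | add x y _ _ h1 h2 => intro r hr; rw [smul_add, h1 r hr, h2 r hr, add_zero]
  | smul c x _ h1 => intro r hr; rw [smul_comm, h1 r hr, smul_zero]

end

section
variable {R : Type} [CommRing R] [IsLocalRing R] [IsNoetherianRing R]
/-- The working context. -/
structure AuxCtx (R : Type) [CommRing R] [IsLocalRing R] (p : Ideal R) (a : R) (n : ℕ) : Prop where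
  prime : p.IsPrime
  am : a ∈ IsLocalRing.maximalIdeal R
  ap : a ∉ p
  hpm : ∀ q : Ideal R, q.IsPrime → p ≤ q → q = p ∨ q = IsLocalRing.maximalIdeal R
  npos : 1 ≤ n
  h0 : ∀ i, i ≠ n → Subsingleton (XT R (R ⧸ IsLocalRing.maximalIdeal R) R i)
  h1 : Nonempty (XT R (R ⧸ IsLocalRing.maximalIdeal R) R n ≃ₗ[R] (R ⧸ IsLocalRing.maximalIdeal R))

variable {p : Ideal R} {a : R} {n : ℕ}

theorem AuxCtx.rad (c : AuxCtx R p a n) (t N : ℕ) :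
    ∃ s, (IsLocalRing.maximalIdeal R)^s ≤ p ^ t ⊔ Ideal.span {a ^ N} := by
  apply Ideal.exists_pow_le_of_le_radical_of_fg _ (IsNoetherian.noetherian _)
  rw [Ideal.radical_eq_sInf]
  refine le_sInf fun q hq => ?_
  obtain ⟨hq1, hq2⟩ := hq
  have hpq : p ≤ q := hq2.le_of_pow_le (n := t) (le_sup_left.trans hq1)
  have haq : a ∈ q := hq2.mem_of_pow_mem N (hq1 (Ideal.mem_sup_right (Ideal.mem_span_singleton_self _)))
  rcases c.hpm q hq2 hpq with rfl | rfl
  · exact absurd haq c.ap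
  · exact le_rfl

theorem AuxCtx.finlen (c : AuxCtx R p a n) (M : Type) [AddCommGroup M] [Module R M] [Module.Finite R M]
    (h : PT p M) (N : ℕ) (hN : ∀ m : M, a ^ N • m = 0) : IsFiniteLength R M := by
  obtain ⟨t, ht⟩ := h.uniform
  obtain ⟨s, hs⟩ := c.rad t N
  refine aux_finlen_of_pow M s fun r hr m => ?_
  obtain ⟨x, hx, y, hy, rfl⟩ := Submodule.mem_sup.1 (hs hr)
  obtain ⟨z, rfl⟩ := Ideal.mem_span_singleton'.1 hy
  rw [add_smul, ht m x hx, mul_smul, hN, smul_zero, add_zero]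

theorem AuxCtx.xt_fin (c : AuxCtx R p a n) (M : Type) [AddCommGroup M] [Module R M] (h : IsFiniteLength R M) (i : ℕ)
   (hi : i ≠ n) : Subsingleton (XT R M R i) := (xt_finlen n c.h0 c.h1 M h).1 i hi

/-- torsion-free modules -/
theorem AuxCtx.xt_tf (c : AuxCtx R p a n) (M : Type) [AddCommGroup M] [Module R M] [Module.Finite R M]
    (h : PT p M) (ha : ∀ m : M, a • m = 0 → m = 0) (i : ℕ) (hi : i + 1 ≠ n) : Subsingleton (XT R M R i) := by
  have hinj : Function.Injective (LinearMap.lsmul R M a) := by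
    rw [← LinearMap.ker_eq_bot, LinearMap.ker_eq_bot']; exact ha
  set A := LinearMap.range (LinearMap.lsmul R M a)
  have hfl : IsFiniteLength R (M ⧸ A) := by
    refine c.finlen (M ⧸ A) (h.of_surjective A.mkQ A.mkQ_surjective) 1 fun m => ?_
    obtain ⟨m, rfl⟩ := A.mkQ_surjective m
    rw [← map_smul, Submodule.mkQ_apply, Submodule.Quotient.mk_eq_zero]
    exact ⟨m, by simp⟩
  have hex : Function.Exact (LinearMap.lsmul R M a) A.mkQ := LinearMap.exact_map_mkQ_range _
  obtain ⟨δ, d1, d2⟩ := (xt_les _ A.mkQ hinj A.mkQ_surjective hex R).2.2 i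
  have := c.xt_fin _ hfl (i+1) hi
  have hsm : ∀ x : XT R M R i, ∃ y, a • y = x := fun x => by
    obtain ⟨y, hy⟩ := (d1 x).1 (Subsingleton.elim _ _)
    exact ⟨y, by rw [← hy, xpull_lsmul]⟩
  have : Module.Finite R (XT R M R i) := ModuleCat.finite_ext R (ModuleCat.of R M) (ModuleCat.of R R) i
  have : (⊤ : Submodule R (XT R M R i)) = ⊥ := by
    refine Submodule.eq_bot_of_le_smul_of_le_jacobson_bot (IsLocalRing.maximalIdeal R) _ Module.Finite.fg_top ?_ ?_
    · intro x _
      obtain ⟨y, rfl⟩ := hsm x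
      exact Submodule.smul_mem_smul c.am trivial
    · exact IsLocalRing.maximalIdeal_le_jacobson ⊥
  exact (Submodule.subsingleton_iff R).1 (subsingleton_of_bot_eq_top this.symm)

theorem aux_torsion_stab (M : Type) [AddCommGroup M] [Module R M] [Module.Finite R M] (a : R) :
    ∃ K : ℕ, ∀ m : M, ∀ N, a ^ N • m = 0 → a ^ K • m = 0 := by
  let f : ℕ →o Submodule R M := ⟨fun k => Submodule.torsionBy R M (a ^ k), fun i j h m hm => by
    rw [Submodule.mem_torsionBy_iff] at hm ⊢
    obtain ⟨d, rfl⟩ := Nat.exists_eq_add_of_le h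
    rw [pow_add, mul_comm, mul_smul, hm, smul_zero]⟩
  obtain ⟨K, hK⟩ := monotone_stabilizes_iff_noetherian.2 (isNoetherian_of_isNoetherianRing_of_finite R M) f
  refine ⟨K, fun m N hN => ?_⟩
  have h1 : m ∈ f (max N K) := f.monotone (le_max_left N K) ((Submodule.mem_torsionBy_iff _ _).2 hN)
  rw [← hK _ (le_max_right N K)] at h1
  exact (Submodule.mem_torsionBy_iff _ _).1 h1

theorem AuxCtx.xt_gen (c : AuxCtx R p a n) (M : Type) [AddCommGroup M] [Module R M] [Module.Finite R M]
    (h : PT p M) : (∀ i, i + 1 < n → Subsingleton (XT R M R i)) ∧ ∃ K, ∀ x : XT R M R n, a ^ K • x = 0 := by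
  obtain ⟨K, hK⟩ := aux_torsion_stab M a
  set G := Submodule.torsionBy R M (a ^ K)
  have hG : IsFiniteLength R G := c.finlen G (h.of_injective G.subtype G.injective_subtype) K fun m => 
    Subtype.ext ((Submodule.mem_torsionBy_iff _ _).1 m.2)
  have htf : ∀ m : M ⧸ G, a • m = 0 → m = 0 := fun m hm => by
    obtain ⟨m, rfl⟩ := G.mkQ_surjective m
    rw [← map_smul, Submodule.mkQ_apply, Submodule.Quotient.mk_eq_zero, Submodule.mem_torsionBy_iff, ← mul_smul, ← pow_succ] at hm
    rw [Submodule.mkQ_apply, Submodule.Quotient.mk_eq_zero, Submodule.mem_torsionBy_iff]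
    exact hK m _ hm
  have hq := c.xt_tf (M ⧸ G) (h.of_surjective G.mkQ G.mkQ_surjective) htf
  refine ⟨fun i hi => xt_mid _ _ G.injective_subtype G.mkQ_surjective (LinearMap.exact_subtype_mkQ G) i 
    (c.xt_fin _ hG i (by omega)) (hq i (by omega)), K, fun x => ?_⟩
  have := hq n (by omega)
  have les := (xt_les _ _ G.injective_subtype G.mkQ_surjective (LinearMap.exact_subtype_mkQ G) R).1 n
  have hx : xpull R G.subtype n (a ^ K • x) = 0 := by
    rw [map_smul, ← xpull_smul]
    have : a ^ K • G.subtype = 0 := by 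
      ext m; exact (Submodule.mem_torsionBy_iff _ _).1 m.2
    rw [this, xpull_zero]
  obtain ⟨y, hy⟩ := (les _).1 hx
  rw [← hy, Subsingleton.elim y 0, map_zero]
end


section
variable {R : Type} [CommRing R] {M N P Y Y' : Type} [AddCommGroup M] [Module R M]
    [AddCommGroup N] [Module R N] [AddCommGroup P] [Module R P]
    [AddCommGroup Y] [Module R Y] [AddCommGroup Y'] [Module R Y']

theorem aux_factor (φ : M →ₗ[R] N) (f : M →ₗ[R] Y) (h : LinearMap.ker φ ≤ LinearMap.ker f) :
    ∃ g : LinearMap.range φ →ₗ[R] Y, ∀ m, g ⟨φ m, LinearMap.mem_range_self φ m⟩ = f m := by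
  refine ⟨(LinearMap.ker φ).liftQ f h ∘ₗ φ.quotKerEquivRange.symm.toLinearMap, fun m => ?_⟩
  have : φ.quotKerEquivRange.symm ⟨φ m, LinearMap.mem_range_self φ m⟩ = (LinearMap.ker φ).mkQ m := by
    rw [LinearEquiv.symm_apply_eq]; rfl
  simp only [LinearMap.comp_apply, LinearEquiv.coe_coe, this]
  simp

theorem aux_desc (φ : M →ₗ[R] N) (hφ : Function.Surjective φ) (f : M →ₗ[R] Y) (h : LinearMap.ker φ ≤ LinearMap.ker f) :
    ∃ g : N →ₗ[R] Y, ∀ m, g (φ m) = f m := by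
  obtain ⟨g, hg⟩ := aux_factor φ f h
  exact ⟨g ∘ₗ LinearMap.codRestrict _ LinearMap.id (fun x => (by rw [LinearMap.range_eq_top.2 hφ]; trivial)), hg⟩

theorem aux_inj_factor [Module.Injective R Y] (φ : M →ₗ[R] N) (f : M →ₗ[R] Y)
    (h : LinearMap.ker φ ≤ LinearMap.ker f) : ∃ g : N →ₗ[R] Y, ∀ m, g (φ m) = f m := by
  obtain ⟨g, hg⟩ := aux_factor φ f h
  obtain ⟨g', hg'⟩ := Module.Injective.out (LinearMap.range φ).subtype (LinearMap.range φ).injective_subtype g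
  exact ⟨g', fun m => (hg' ⟨φ m, LinearMap.mem_range_self φ m⟩).trans (hg m)⟩

theorem aux_retract [Module.Injective R Y] (i : P →ₗ[R] Y) (r : Y →ₗ[R] P) (h : ∀ x, r (i x) = x) :
    Module.Injective R P := by
  refine ⟨fun X X' _ _ _ _ f hf g => ?_⟩
  obtain ⟨k, hk⟩ := Module.Injective.out f hf (i ∘ₗ g)
  exact ⟨r ∘ₗ k, fun x => by simp [hk, h]⟩

theorem aux_inj_compl (B : Submodule R M) [Module.Injective R B] : ∃ C : Submodule R M, IsCompl B C := by
  obtain ⟨k, hk⟩ := Module.Injective.out B.subtype B.injective_subtype (LinearMap.id)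
  exact ⟨_, LinearMap.isCompl_of_proj (f := k) hk⟩

/-- torsion submodule -/
def gam (p : Ideal R) (M : Type) [AddCommGroup M] [Module R M] : Submodule R M where
  carrier := {m | ∃ t : ℕ, ∀ r ∈ p ^ t, r • m = 0}
  zero_mem' := ⟨0, by simp⟩
  add_mem' := by
    rintro x y ⟨t, ht⟩ ⟨s, hs⟩
    exact ⟨t + s, fun r hr => by
      rw [smul_add, ht r (Ideal.pow_le_pow_right (by omega) hr), hs r (Ideal.pow_le_pow_right (by omega) hr), add_zero]⟩
  smul_mem' := by
    rintro c x ⟨t, ht⟩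
    exact ⟨t, fun r hr => by rw [smul_comm, ht r hr, smul_zero]⟩

theorem gam_mem {p : Ideal R} {m : M} : m ∈ gam p M ↔ ∃ t : ℕ, ∀ r ∈ p ^ t, r • m = 0 := Iff.rfl

theorem gam_pt (p : Ideal R) : PT p (gam p M) := fun m => by
  obtain ⟨t, ht⟩ := m.2
  exact ⟨t, fun r hr => Subtype.ext (ht r hr)⟩

theorem PT.map_mem_gam {p : Ideal R} (h : PT p M) (f : M →ₗ[R] N) (m : M) : f m ∈ gam p N := by
  obtain ⟨t, ht⟩ := h m
  exact ⟨t, fun r hr => by rw [← map_smul, ht r hr, map_zero]⟩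

theorem aux_AR [IsNoetherianRing R] (p J : Ideal R) (f : J →ₗ[R] M) (h : PT p M) :
    ∃ s : ℕ, ∀ x : J, x.1 ∈ p ^ s → f x = 0 := by
  obtain ⟨t, ht⟩ := PT.uniform (M := LinearMap.range f) (h.of_injective _ (LinearMap.range f).injective_subtype)
  obtain ⟨k, hk⟩ := Ideal.exists_pow_inf_eq_pow_smul p J
  refine ⟨k + t, fun x hx => ?_⟩
  have h1 : x.1 ∈ p ^ (k+t) • (⊤ : Ideal R) ⊓ J := ⟨by simpa using hx, x.2⟩
  rw [hk (k+t) (by omega), show k + t - k = t by omega] at h1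
  have h2 : p ^ t • (p ^ k • (⊤ : Ideal R) ⊓ J) ≤ (LinearMap.ker f).map J.subtype := by
    rw [Submodule.smul_le]
    intro r hr y hy
    refine ⟨r • ⟨y, hy.2⟩, ?_, rfl⟩
    rw [SetLike.mem_coe, LinearMap.mem_ker, map_smul]
    have := ht ⟨f ⟨y, hy.2⟩, LinearMap.mem_range_self _ _⟩ r hr
    exact congrArg Subtype.val this
  obtain ⟨y, hy, hyx⟩ := h2 h1
  have : y = x := Subtype.ext hyx
  rw [← this]; exact hy

theorem gam_injective [IsNoetherianRing R] (p : Ideal R) [Module.Injective R M] : Module.Injective R (gam p M) := by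
  apply Module.Baer.injective
  intro J f
  obtain ⟨s, hs⟩ := aux_AR p J f (gam_pt p)
  obtain ⟨g, hg⟩ := aux_inj_factor ((p^s).mkQ ∘ₗ J.subtype) ((gam p M).subtype ∘ₗ f) (by
    intro x hx
    rw [LinearMap.mem_ker] at hx ⊢
    have : x.1 ∈ p ^ s := (Submodule.Quotient.mk_eq_zero (p^s)).1 hx
    rw [LinearMap.comp_apply, hs x this, map_zero])
  have hpt : PT p (R ⧸ p ^ s) := fun m => by
    refine ⟨s, fun r hr => ?_⟩
    obtain ⟨m, rfl⟩ := Ideal.Quotient.mk_surjective m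
    change Ideal.Quotient.mk _ (r * m) = 0
    rw [Ideal.Quotient.eq_zero_iff_mem]
    exact Ideal.mul_mem_right _ _ hr
  refine ⟨LinearMap.codRestrict (gam p M) (g ∘ₗ (p^s).mkQ) fun x => hpt.map_mem_gam g _, fun x hx => ?_⟩
  exact Subtype.ext (hg ⟨x, hx⟩)
end

/-- the inductive statement for constructing partial injective resolutions -/
def PP {R : Type} [CommRing R] (p : Ideal R) (i : ℕ) : Prop :=
  ∃ (Z : Type) (_ : AddCommGroup Z) (_ : Module R Z) (ε : XT R Z R i) (B : Submodule R Z),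
    Module.Injective R B ∧ PT p B ∧
    (∀ (X : Type) [AddCommGroup X] [Module R X] (j k : ℕ) (hk : j + 1 + i = k),
      Function.Bijective (fun x : XT R X Z (j+1) => (x.comp ε hk : XT R X R k))) ∧
    (∀ (X : Type) [AddCommGroup X] [Module R X],
      Function.Surjective (fun f : X →ₗ[R] Z => xpull R f i ε)) ∧
    (∀ (X : Type) [AddCommGroup X] [Module R X], PT p X → ∀ f : X →ₗ[R] Z,
      xpull R f i ε = 0 ↔ LinearMap.range f ≤ B)

section
variable {R : Type} [CommRing R]

theorem xt_zero_surj {X Z : Type} [AddCommGroup X] [Module R X] [AddCommGroup Z] [Module R Z] (x : XT R X Z 0) :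
    ∃ f : X →ₗ[R] Z, x = Abelian.Ext.mk₀ (ModuleCat.ofHom f) := by
  obtain ⟨f, hf⟩ := (Abelian.Ext.mk₀_bijective _ _).2 x
  exact ⟨f.hom, hf.symm⟩

theorem xt_zero_inj {X Z : Type} [AddCommGroup X] [Module R X] [AddCommGroup Z] [Module R Z] (f g : X →ₗ[R] Z) 
   (h : (Abelian.Ext.mk₀ (ModuleCat.ofHom f) : XT R X Z 0) = Abelian.Ext.mk₀ (ModuleCat.ofHom g)) : f = g := by
  have := (Abelian.Ext.mk₀_bijective _ _).1 h
  exact congrArg ModuleCat.Hom.hom this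

theorem PP_zero (p : Ideal R) : PP p 0 := by
  refine ⟨R, inferInstance, inferInstance, Abelian.Ext.mk₀ (𝟙 _), ⊥, ?_, ?_, ?_, ?_, ?_⟩
  · refine ⟨fun X X' _ _ _ _ f hf g => ⟨0, fun x => Subsingleton.elim _ _⟩⟩
  · intro m; exact ⟨0, fun r _ => Subsingleton.elim _ _⟩
  · rintro X _ _ j k rfl
    convert! Function.bijective_id using 1
    ext x
    exact Abelian.Ext.comp_mk₀_id x
  · intro X _ _ x
    obtain ⟨f, rfl⟩ := xt_zero_surj x
    exact ⟨f, Abelian.Ext.comp_mk₀_id _⟩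
  · intro X _ _ hX f
    rw [le_bot_iff, LinearMap.range_eq_bot, xpull_apply, Abelian.Ext.comp_mk₀_id]
    constructor
    · intro h
      apply xt_zero_inj
      rw [h]; exact (Abelian.Ext.mk₀_zero _ _).symm
    · rintro rfl; exact (Abelian.Ext.mk₀_zero _ _)

theorem aux_enough (Z : Type) [AddCommGroup Z] [Module R Z] :
    ∃ (I : Type) (_ : AddCommGroup I) (_ : Module R I) (j : Z →ₗ[R] I), Module.Injective R I ∧ Function.Injective j := by
  refine ⟨(Injective.under (ModuleCat.of R Z) : ModuleCat R), inferInstance, inferInstance, (Injective.ι (ModuleCat.of R Z)).hom, ?_, ?_⟩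
  · apply (Module.injective_iff_injective_object R _).2
    exact (inferInstance : CategoryTheory.Injective (Injective.under (ModuleCat.of R Z)))
  · exact (ModuleCat.mono_iff_injective (Injective.ι (ModuleCat.of R Z))).1 inferInstance

theorem pt_quot_pow (p : Ideal R) (t : ℕ) : PT p (R ⧸ p ^ t) := fun m => by
  refine ⟨t, fun r hr => ?_⟩
  obtain ⟨m, rfl⟩ := Ideal.Quotient.mk_surjective m
  change Ideal.Quotient.mk _ (r * m) = 0
  rw [Ideal.Quotient.eq_zero_iff_mem]
  exact Ideal.mul_mem_right _ _ hr

theorem PP_succ [IsNoetherianRing R] (p : Ideal R) (i : ℕ) (h : PP p i)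
    (hv : ∀ t : ℕ, Subsingleton (XT R (R ⧸ p ^ t) R i)) : PP p (i+1) := by
  obtain ⟨Z, _, _, ε, B, hBi, hBp, hbij, hsur, hker⟩ := h
  have hBeq : ∀ z : Z, z ∈ gam p Z → z ∈ B := by
    rintro z ⟨t, ht⟩
    let f : (R ⧸ p ^ t) →ₗ[R] Z := Submodule.liftQ (p^t) (LinearMap.toSpanSingleton R Z z) (fun r hr => by simpa using ht r hr)
    have := (hker _ (pt_quot_pow p t) f).1 ((hv t).elim _ _)
    apply this
    exact ⟨Submodule.Quotient.mk 1, (Submodule.liftQ_apply _ _ _).trans (by simp)⟩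
  obtain ⟨I, _, _, j, hI, hj⟩ := aux_enough (R := R) Z
  let Z' := I ⧸ LinearMap.range j
  let π : I →ₗ[R] Z' := (LinearMap.range j).mkQ
  have hπ : Function.Surjective π := Submodule.mkQ_surjective _
  have hex : Function.Exact j π := LinearMap.exact_map_mkQ_range j
  obtain ⟨δ, hδ⟩ := xt_cov j π hj hπ hex
  have := gam_injective (M := I) p
  let q : gam p I →ₗ[R] Z' := π ∘ₗ (gam p I).subtype
  -- retraction
  let jB : B →ₗ[R] gam p I := LinearMap.codRestrict (gam p I) (j ∘ₗ B.subtype) (fun b => hBp.map_mem_gam _ b)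
  have hjB : Function.Injective jB := fun x y hxy => by
    have : j x = j y := congrArg Subtype.val hxy
    exact Subtype.ext (hj this)
  obtain ⟨ρ, hρ⟩ := Module.Injective.out jB hjB LinearMap.id
  obtain ⟨σ, hσ⟩ := aux_factor q (LinearMap.id - jB ∘ₗ ρ) (by
    intro x hx
    have hx' : π x.1 = 0 := hx
    obtain ⟨z, hz⟩ := (hex _).1 hx'
    have hzB : z ∈ B := hBeq z (by
      obtain ⟨t, ht⟩ := x.2
      exact ⟨t, fun r hr => hj (by rw [map_smul, hz, ht r hr, map_zero])⟩)
    have : x = jB ⟨z, hzB⟩ := Subtype.ext hz.symm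
    rw [LinearMap.mem_ker, this]
    simp [hρ])
  have hqσ : ∀ y : LinearMap.range q, q (σ y) = y := by
    rintro ⟨_, x, rfl⟩
    rw [hσ]
    have : q (jB (ρ x)) = 0 := hex.apply_apply_eq_zero _
    simp [this]
  refine ⟨Z', inferInstance, inferInstance, δ.comp ε (add_comm 1 i), LinearMap.range q, ?_, ?_, ?_, ?_, ?_⟩
  · exact aux_retract σ (LinearMap.rangeRestrict q) fun x => Subtype.ext (hqσ x)
  · exact (gam_pt p).of_surjective q.rangeRestrict q.surjective_rangeRestrict
  · intro X _ _ l k hk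
    have h1 := hbij X (l+1) k (by omega)
    have h2 : Function.Bijective (fun x : XT R X Z' (l+1) => (x.comp δ rfl : XT R X Z (l+1+1))) := by
      constructor
      · intro x y hxy
        have : (fun x : XT R X Z' (l+1) => (x.comp δ rfl : XT R X Z (l+1+1))) (x - y) = 0 := by
          have hxy' : (x.comp δ rfl : XT R X Z (l+1+1)) = y.comp δ rfl := hxy
          change Abelian.Ext.comp (x - y) δ rfl = 0
          rw [sub_eq_add_neg, Abelian.Ext.add_comp, Abelian.Ext.neg_comp, hxy', add_neg_cancel]
        obtain ⟨z, hz⟩ := ((hδ X (l+1)).1 _).1 this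
        have := xt_injective (R := R) (M := X) (Y := I) l
        rw [Subsingleton.elim z 0, map_zero] at hz
        exact (sub_eq_zero.1 hz.symm)
      · intro y
        have := xt_injective (R := R) (M := X) (Y := I) (l+1)
        exact ((hδ X (l+1)).2 y).1 (Subsingleton.elim _ _)
    convert! h1.comp h2 using 1
    ext x
    exact (Abelian.Ext.comp_assoc x δ ε rfl (add_comm 1 i) (by omega)).symm
  · intro X _ _ y
    obtain ⟨x, rfl⟩ := (hbij X 0 (i+1) (by omega)).2 y
    have := xt_injective (R := R) (M := X) (Y := I) 0
    obtain ⟨f, rfl⟩ := ((hδ X 0).2 x).1 (Subsingleton.elim _ _)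
    obtain ⟨f, rfl⟩ := xt_zero_surj f
    exact ⟨f, (Abelian.Ext.comp_assoc _ δ ε (zero_add 1) (add_comm 1 i) (by omega)).symm⟩
  · intro X _ _ hX f
    have e1 : xpull R f (i+1) (δ.comp ε (add_comm 1 i)) = 0 ↔
      ((Abelian.Ext.mk₀ (ModuleCat.ofHom f)).comp δ (zero_add 1) : XT R X Z 1) = 0 := by
      have : xpull R f (i+1) (δ.comp ε (add_comm 1 i)) = ((Abelian.Ext.mk₀ (ModuleCat.ofHom f)).comp δ (zero_add 1)).comp ε (add_comm 1 i) :=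
        (Abelian.Ext.comp_assoc _ δ ε (zero_add 1) (add_comm 1 i) (by omega)).symm
      rw [this]
      constructor
      · intro h
        apply (hbij X 0 (i+1) (by omega)).1
        change Abelian.Ext.comp _ _ _ = Abelian.Ext.comp _ _ _
        rw [Abelian.Ext.zero_comp]; exact h
      · intro h; rw [h, Abelian.Ext.zero_comp]
    rw [e1]
    have e2 := (hδ X 0).1 (Abelian.Ext.mk₀ (ModuleCat.ofHom f))
    refine Iff.trans e2 ⟨?_, ?_⟩
    · rintro ⟨z, hz⟩
      obtain ⟨g, rfl⟩ := xt_zero_surj z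
      have : π ∘ₗ g = f := by
        apply xt_zero_inj
        rw [← hz, ModuleCat.ofHom_comp, ← Abelian.Ext.mk₀_comp_mk₀]; rfl
      rintro _ ⟨x, rfl⟩
      rw [← this]
      exact ⟨⟨g x, hX.map_mem_gam g x⟩, rfl⟩
    · intro hr
      let g : X →ₗ[R] I := (gam p I).subtype ∘ₗ σ ∘ₗ LinearMap.codRestrict (LinearMap.range q) f (fun x => hr ⟨x, rfl⟩)
      refine ⟨Abelian.Ext.mk₀ (ModuleCat.ofHom g), ?_⟩
      have : π ∘ₗ g = f := by
        ext x
        exact hqσ ⟨f x, hr ⟨x, rfl⟩⟩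
      conv_rhs => rw [← this, ModuleCat.ofHom_comp, ← Abelian.Ext.mk₀_comp_mk₀]
      rfl

/-- representability -/
theorem PP_repr (p : Ideal R) (i : ℕ) (h : PP p i) :
    ∃ (H : Type) (_ : AddCommGroup H) (_ : Module R H) (ε : XT R H R i), PT p H ∧ 
    ∀ (X : Type) [AddCommGroup X] [Module R X], PT p X →
      Function.Bijective (fun f : X →ₗ[R] H => xpull R f i ε) := by
  obtain ⟨Z, _, _, ε, B, hBi, hBp, hbij, hsur, hker⟩ := h
  let B' : Submodule R (gam p Z) := B.comap (gam p Z).subtype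
  let iB : B →ₗ[R] gam p Z := LinearMap.codRestrict (gam p Z) B.subtype (fun b => hBp.map_mem_gam _ b)
  obtain ⟨ρ, hρ⟩ := Module.Injective.out iB (fun x y hxy => Subtype.ext (congrArg (fun z : gam p Z => z.1) hxy)) LinearMap.id
  let H := LinearMap.ker ρ
  let ι : H →ₗ[R] Z := (gam p Z).subtype ∘ₗ H.subtype
  have hι : Function.Injective ι := (Submodule.injective_subtype _).comp (Submodule.injective_subtype _)
  refine ⟨H, inferInstance, inferInstance, xpull R ι i ε, (gam_pt p).of_injective _ H.injective_subtype, ?_⟩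
  intro X _ _ hX
  constructor
  · intro f g hfg
    have h0 : xpull R (ι ∘ₗ (f - g)) i ε = 0 := by
      rw [LinearMap.comp_sub, sub_eq_add_neg, ← neg_one_smul R, xpull_add, xpull_smul, xpull_comp f, xpull_comp g]
      rw [show xpull R f i (xpull R ι i ε) = xpull R g i (xpull R ι i ε) from hfg]
      simp
    rw [hker X hX] at h0
    rw [← sub_eq_zero]
    ext1 x
    have hm : ι ((f - g) x) ∈ B := h0 ⟨x, rfl⟩
    have e : ((f-g) x).1 = iB ⟨_, hm⟩ := rfl
    have e2 : ρ ((f-g) x).1 = 0 := ((f - g) x).2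
    rw [e, hρ] at e2
    apply hι
    rw [LinearMap.zero_apply, map_zero]
    exact congrArg Subtype.val e2
  · intro y
    obtain ⟨f, rfl⟩ := hsur X y
    let f' : X →ₗ[R] gam p Z := LinearMap.codRestrict _ f (fun x => hX.map_mem_gam f x)
    let g : X →ₗ[R] H := LinearMap.codRestrict H (f' - iB ∘ₗ ρ ∘ₗ f') (fun x => by
      simp [H, hρ])
    refine ⟨g, ?_⟩
    change xpull R g i (xpull R ι i ε) = xpull R f i ε
    rw [← xpull_comp]
    have : f = ι ∘ₗ g + B.subtype ∘ₗ ρ ∘ₗ f' := by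
      ext x
      change f x = (f x - (ρ (f' x) : Z)) + ρ (f' x)
      simp
    conv_rhs => rw [this]
    rw [xpull_add, (hker X hX (B.subtype ∘ₗ ρ ∘ₗ f')).2, add_zero]
    rintro _ ⟨x, rfl⟩
    exact (ρ (f' x)).2
end


section
variable {R : Type} [CommRing R] [IsLocalRing R] [IsNoetherianRing R]
  {p : Ideal R} {a : R} {d : ℕ}

/-- H represents Ext^d(-,R) on p-torsion modules -/
structure RepH (R : Type) [CommRing R] (p : Ideal R) (d : ℕ) (H : Type) [AddCommGroup H] [Module R H]
    (ε : XT R H R d) : Prop where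
  pt : PT p H
  bij : ∀ (X : Type) [AddCommGroup X] [Module R X], PT p X →
      Function.Bijective (fun f : X →ₗ[R] H => xpull R f d ε)

theorem AuxCtx.exists_rep (c : AuxCtx R p a (d+1)) : ∃ (H : Type) (_ : AddCommGroup H) (_ : Module R H) (ε : XT R H R d), 
    RepH R p d H ε := by
  have key : ∀ i ≤ d, PP p i := by
    intro i
    induction i with
    | zero => intro _; exact PP_zero p
    | succ i ih => exact fun hi => PP_succ p i (ih (by omega)) (fun t => (c.xt_gen _ (pt_quot_pow p t)).1 i (by omega))
  obtain ⟨H, i1, i2, ε, h1, h2⟩ := PP_repr p d (key d le_rfl)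
  exact ⟨H, i1, i2, ε, ⟨h1, h2⟩⟩

variable {H : Type} [AddCommGroup H] [Module R H] {ε : XT R H R d}

theorem RepH.extend (h : RepH R p d H ε) {A M C : Type} [AddCommGroup A] [Module R A]
    [AddCommGroup M] [Module R M] [AddCommGroup C] [Module R C] (i : A →ₗ[R] M) (π : M →ₗ[R] C)
    (hi : Function.Injective i) (hπ : Function.Surjective π) (hex : Function.Exact i π) (hM : PT p M)
    (r : R) (hr : ∀ x : XT R C R (d+1), r • x = 0) (f : A →ₗ[R] H) :
    ∃ g : M →ₗ[R] H, ∀ x, g (i x) = r • f x := by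
  obtain ⟨δ, d1, d2⟩ := (xt_les i π hi hπ hex R).2.2 d
  obtain ⟨y, hy⟩ := (d1 (r • xpull R f d ε)).1 (by rw [map_smul, hr])
  obtain ⟨g, rfl⟩ := (h.bij M hM).2 y
  refine ⟨g, fun x => ?_⟩
  have : g ∘ₗ i = r • f := by
    apply (h.bij A (hM.of_injective i hi)).1
    change xpull R (g ∘ₗ i) d ε = xpull R (r • f) d ε
    rw [xpull_comp, xpull_smul]; exact hy
  exact LinearMap.congr_fun this x

theorem AuxCtx.change (c : AuxCtx R p a (d+1)) (b : R) (hb : b ∈ IsLocalRing.maximalIdeal R) (hbp : b ∉ p) :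
    AuxCtx R p b (d+1) := ⟨c.prime, hb, hbp, c.hpm, c.npos, c.h0, c.h1⟩

theorem RepH.nzd (h : RepH R p d H ε) (c : AuxCtx R p a (d+1)) (x : H) (hx : a • x = 0) : x = 0 := by
  let N := Submodule.span R {x}
  have hpt : PT p N := h.pt.of_injective N.subtype N.injective_subtype
  have hfl : IsFiniteLength R N := c.finlen N hpt 1 (by
    rintro ⟨y, hy⟩
    obtain ⟨r, rfl⟩ := Submodule.mem_span_singleton.1 hy
    apply Subtype.ext
    change a ^ 1 • r • x = 0
    rw [pow_one, smul_comm, hx, smul_zero])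
  have := c.xt_fin N hfl d (by omega)
  have h0 : N.subtype = 0 := (h.bij N hpt).1 (Subsingleton.elim _ _)
  exact LinearMap.congr_fun h0 ⟨x, Submodule.mem_span_singleton_self x⟩

theorem RepH.nzd' (h : RepH R p d H ε) (c : AuxCtx R p a (d+1)) (b : R) (hb : b ∉ p) (x : H) (hx : b • x = 0) : x = 0 := by
  by_cases hbm : b ∈ IsLocalRing.maximalIdeal R
  · exact h.nzd (c.change b hbm hb) x hx
  · have : IsUnit b := by simpa using! hbm
    exact (this.smul_eq_zero).1 hx

/-- the localization data -/
structure LocD (R : Type) [CommRing R] (a : R) (H E₀ : Type) [AddCommGroup H] [Module R H]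
  [AddCommGroup E₀] [Module R E₀] (φ : H →ₗ[R] E₀) : Prop where
  inj : Function.Injective φ
  frac : ∀ e, ∃ N : ℕ, ∃ x, a ^ N • e = φ x
  bij : ∀ N : ℕ, Function.Bijective (fun e : E₀ => a ^ N • e)

theorem RepH.exists_loc (h : RepH R p d H ε) (c : AuxCtx R p a (d+1)) :
    ∃ (E₀ : Type) (_ : AddCommGroup E₀) (_ : Module R E₀) (φ : H →ₗ[R] E₀), LocD R a H E₀ φ := by
  let S := Submonoid.powers a
  have hpow : ∀ N : ℕ, ∀ x : H, a ^ N • x = 0 → x = 0 := by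
    intro N
    induction N with
    | zero => intro x hx; simpa using hx
    | succ N ih => intro x hx; rw [pow_succ, mul_smul] at hx; exact h.nzd c _ (ih _ hx)
  refine ⟨LocalizedModule S H, inferInstance, inferInstance, LocalizedModule.mkLinearMap S H, ?_, ?_, ?_⟩
  · rw [← LinearMap.ker_eq_bot, LinearMap.ker_eq_bot']
    intro x hx
    obtain ⟨⟨_, N, rfl⟩, hs⟩ := (IsLocalizedModule.eq_zero_iff S (LocalizedModule.mkLinearMap S H)).1 hx
    exact hpow N x hs
  · intro e
    obtain ⟨⟨x, ⟨_, N, rfl⟩⟩, hs⟩ := IsLocalizedModule.surj S (LocalizedModule.mkLinearMap S H) e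
    exact ⟨N, x, hs⟩
  · intro N
    have := IsLocalizedModule.map_units (S := S) (LocalizedModule.mkLinearMap S H) ⟨a^N, N, rfl⟩
    rw [Module.End.isUnit_iff] at this
    exact this

variable {E₀ : Type} [AddCommGroup E₀] [Module R E₀] {φ : H →ₗ[R] E₀}

theorem LocD.pt (l : LocD R a H E₀ φ) (h : PT p H) : PT p E₀ := fun e => by
  obtain ⟨N, x, hx⟩ := l.frac e
  obtain ⟨t, ht⟩ := h x
  refine ⟨t, fun r hr => (l.bij N).1 ?_⟩
  change a ^ N • r • e = a ^ N • 0
  rw [smul_comm, hx, ← map_smul, ht r hr, map_zero, smul_zero]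

theorem LocD.lift (l : LocD R a H E₀ φ) {A : Type} [AddCommGroup A] [Module R A] [Module.Finite R A] (f : A →ₗ[R] E₀) :
    ∃ N : ℕ, ∃ g : A →ₗ[R] H, ∀ x, φ (g x) = a ^ N • f x := by
  have h1 : ∃ N : ℕ, ∀ x, a ^ N • f x ∈ LinearMap.range φ := by
    choose T y hT using l.frac
    obtain ⟨s, hs⟩ := Module.Finite.fg_top (R := R) (M := A)
    refine ⟨s.sup (fun x => T (f x)), fun m => ?_⟩
    have hm : m ∈ Submodule.span R (s : Set A) := by rw [hs]; trivial
    induction hm using Submodule.span_induction with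
    | mem x hx => 
      obtain ⟨k, hk⟩ := Nat.exists_eq_add_of_le (Finset.le_sup (f := fun x => T (f x)) hx)
      rw [hk, add_comm, pow_add, mul_smul, hT]
      exact Submodule.smul_mem _ _ ⟨_, rfl⟩
    | zero => simp
    | add x y _ _ h1 h2 => rw [map_add, smul_add]; exact add_mem h1 h2
    | smul c x _ h1 => rw [map_smul, smul_comm]; exact Submodule.smul_mem _ _ h1
  obtain ⟨N, hN⟩ := h1
  let e := LinearEquiv.ofInjective φ l.inj
  refine ⟨N, e.symm.toLinearMap ∘ₗ LinearMap.codRestrict (LinearMap.range φ) (a ^ N • f) hN, fun x => ?_⟩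
  have : ∀ y : LinearMap.range φ, φ (e.symm y) = y := fun y => congrArg Subtype.val (e.apply_symm_apply y)
  exact this _

theorem LocD.injective (l : LocD R a H E₀ φ) (h : RepH R p d H ε) (c : AuxCtx R p a (d+1)) : Module.Injective R E₀ := by
  apply Module.Baer.injective
  intro J f
  obtain ⟨s, hs⟩ := aux_AR p J f (l.pt h.pt)
  let ψ := (p^s).mkQ ∘ₗ J.subtype
  obtain ⟨f', hf'⟩ := aux_factor ψ f (by
    intro x hx
    exact hs x ((Submodule.Quotient.mk_eq_zero (p^s)).1 hx))
  have : IsNoetherian R (R ⧸ p ^ s) := inferInstance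
  let A := LinearMap.range ψ
  obtain ⟨N, f1, hf1⟩ := l.lift f'
  obtain ⟨K, hK⟩ := (c.xt_gen ((R ⧸ p ^ s) ⧸ A) ((pt_quot_pow p s).of_surjective A.mkQ A.mkQ_surjective)).2
  obtain ⟨g, hg⟩ := h.extend A.subtype A.mkQ A.injective_subtype A.mkQ_surjective (LinearMap.exact_subtype_mkQ A)
    (pt_quot_pow p s) (a ^ K) hK f1
  obtain ⟨e, he⟩ := (l.bij (K+N)).2 (φ (g ((p^s).mkQ 1)))
  refine ⟨LinearMap.toSpanSingleton R E₀ e, fun x hx => (l.bij (K+N)).1 ?_⟩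
  change a ^ (K + N) • x • e = a ^ (K+N) • f ⟨x, hx⟩
  have he' : a ^ (K+N) • e = φ (g ((p^s).mkQ 1)) := he
  rw [smul_comm, he', ← map_smul, ← map_smul, ← map_smul]
  have h1 : (p^s).mkQ (x • 1) = A.subtype ⟨ψ ⟨x, hx⟩, LinearMap.mem_range_self _ _⟩ := by
    simp [ψ]
  rw [h1, hg, map_smul, hf1, hf', pow_add, mul_smul]

theorem LocD.quot_pt (l : LocD R a H E₀ φ) (h : RepH R p d H ε) (c : AuxCtx R p a (d+1)) :
    PT (IsLocalRing.maximalIdeal R) (E₀ ⧸ LinearMap.range φ) := fun e => by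
  obtain ⟨e, rfl⟩ := Submodule.mkQ_surjective _ e
  obtain ⟨t, ht⟩ := l.pt h.pt e
  obtain ⟨N, x, hx⟩ := l.frac e
  obtain ⟨s, hs⟩ := c.rad t N
  refine ⟨s, fun r hr => ?_⟩
  obtain ⟨u, hu, y, hy, rfl⟩ := Submodule.mem_sup.1 (hs hr)
  obtain ⟨z, rfl⟩ := Ideal.mem_span_singleton'.1 hy
  rw [← map_smul, Submodule.mkQ_apply, Submodule.Quotient.mk_eq_zero, add_smul, ht u hu, zero_add, mul_smul, hx]
  exact Submodule.smul_mem _ _ ⟨_, rfl⟩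

theorem RepH.lift (h : RepH R p d H ε) (c : AuxCtx R p a (d+1)) (l : LocD R a H E₀ φ)
    {A : Type} [AddCommGroup A] [Module R A] [Module.Finite R A]
    (hA : PT p A) (ha : ∀ m : A, a • m = 0 → m = 0) (f : A →ₗ[R] E₀ ⧸ LinearMap.range φ) :
    ∃ g : A →ₗ[R] E₀, ∀ x, (LinearMap.range φ).mkQ (g x) = f x := by
  let q := (LinearMap.range φ).mkQ
  let X : Submodule R (A × E₀) := LinearMap.ker (f ∘ₗ LinearMap.fst R A E₀ - q ∘ₗ LinearMap.snd R A E₀)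
  have hX : ∀ x : X, f x.1.1 = q x.1.2 := fun x => sub_eq_zero.1 x.2
  let π : X →ₗ[R] A := LinearMap.fst R A E₀ ∘ₗ X.subtype
  have hπ : Function.Surjective π := fun x => by
    obtain ⟨e, he⟩ := (LinearMap.range φ).mkQ_surjective (f x)
    exact ⟨⟨(x, e), sub_eq_zero.2 he.symm⟩, rfl⟩
  let i : H →ₗ[R] X := LinearMap.codRestrict X (LinearMap.inr R A E₀ ∘ₗ φ) (fun x => by
    have : q (φ x) = 0 := (Submodule.Quotient.mk_eq_zero _).2 ⟨x, rfl⟩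
    simp [X, this])
  have hi : Function.Injective i := fun x y hxy => l.inj (congrArg (fun z : X => z.1.2) hxy)
  have hex : Function.Exact i π := by
    intro x
    constructor
    · intro hx
      have hx' : x.1.1 = 0 := hx
      have := hX x
      rw [hx', map_zero] at this
      obtain ⟨y, hy⟩ := (Submodule.Quotient.mk_eq_zero _).1 this.symm
      exact ⟨y, Subtype.ext (Prod.ext hx'.symm hy)⟩
    · rintro ⟨y, rfl⟩; rfl
  have hXpt : PT p X := fun x => by
    obtain ⟨t, ht⟩ := hA x.1.1
    obtain ⟨s, hs⟩ := l.pt h.pt x.1.2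
    refine ⟨t + s, fun r hr => Subtype.ext (Prod.ext (ht r (Ideal.pow_le_pow_right (by omega) hr)) (hs r (Ideal.pow_le_pow_right (by omega) hr)))⟩
  have := c.xt_tf A hA ha (d+1) (by omega)
  obtain ⟨u, hu⟩ := h.extend i π hi hπ hex hXpt 1 (fun x => Subsingleton.elim _ _) LinearMap.id
  obtain ⟨g, hg⟩ := aux_desc π hπ (LinearMap.snd R A E₀ ∘ₗ X.subtype - φ ∘ₗ u) (by
    intro x hx
    obtain ⟨y, rfl⟩ := (hex x).1 hx
    rw [LinearMap.mem_ker, LinearMap.sub_apply, LinearMap.comp_apply φ u, hu, one_smul]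
    exact sub_self (φ y))
  refine ⟨g, fun y => ?_⟩
  obtain ⟨x, rfl⟩ := hπ y
  rw [hg]
  have h2 : q (φ (u x)) = 0 := (Submodule.Quotient.mk_eq_zero _).2 ⟨_, rfl⟩
  change q (x.1.2 - φ (u x)) = f x.1.1
  rw [map_sub, h2, sub_zero, hX]

theorem LocD.quot_injective (l : LocD R a H E₀ φ) (h : RepH R p d H ε) (c : AuxCtx R p a (d+1)) 
    (chev : ∀ k, ∃ t, auxSat p a t ≤ IsLocalRing.maximalIdeal R ^ k) :
    Module.Injective R (E₀ ⧸ LinearMap.range φ) := by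
  have := l.injective h c
  apply Module.Baer.injective
  intro J f
  obtain ⟨s, hs⟩ := aux_AR _ J f (l.quot_pt h c)
  obtain ⟨t, ht⟩ := chev s
  let Q := auxSat p a t
  let ψ := Q.mkQ ∘ₗ J.subtype
  obtain ⟨f', hf'⟩ := aux_factor ψ f (by
    intro x hx
    exact hs x (ht ((Submodule.Quotient.mk_eq_zero Q).1 hx)))
  have : IsNoetherian R (R ⧸ Q) := inferInstance
  let A := LinearMap.range ψ
  have hQpt : PT p (R ⧸ Q) := fun m => by
    refine ⟨t, fun r hr => ?_⟩
    obtain ⟨m, rfl⟩ := Ideal.Quotient.mk_surjective m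
    change Ideal.Quotient.mk _ (r * m) = 0
    rw [Ideal.Quotient.eq_zero_iff_mem]
    refine Ideal.mul_mem_right _ _ ?_
    exact (auxSat_mem _ _ _ _).2 ⟨0, by simpa using hr⟩
  obtain ⟨g, hg⟩ := h.lift c l (A := A) (hQpt.of_injective A.subtype A.injective_subtype) (by
    rintro ⟨y, hy⟩ hm
    apply Subtype.ext
    have hm' : a • y = 0 := congrArg Subtype.val hm
    obtain ⟨y, rfl⟩ := Ideal.Quotient.mk_surjective y
    change Ideal.Quotient.mk _ (a * y) = 0 at hm'
    change Ideal.Quotient.mk _ y = 0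
    rw [Ideal.Quotient.eq_zero_iff_mem] at hm' ⊢
    obtain ⟨N, hN⟩ := (auxSat_mem _ _ _ _).1 hm'
    exact (auxSat_mem _ _ _ _).2 ⟨N+1, by rw [pow_succ, mul_assoc]; exact hN⟩) f'
  obtain ⟨g', hg'⟩ := Module.Injective.out A.subtype A.injective_subtype g
  refine ⟨(LinearMap.range φ).mkQ ∘ₗ g' ∘ₗ Q.mkQ, fun x hx => ?_⟩
  rw [← hf' ⟨x, hx⟩, ← hg, ← hg']
  rfl
end


section
variable {R : Type} [CommRing R]

/-- the submodule b N -/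
abbrev smt (b : R) (N : Type) [AddCommGroup N] [Module R N] : Submodule R N := LinearMap.range (LinearMap.lsmul R N b)

theorem smt_mem {b : R} {N : Type} [AddCommGroup N] [Module R N] {x : N} : x ∈ smt b N ↔ ∃ y, b • y = x := Iff.rfl

theorem aux_length_pow (N : Type) [AddCommGroup N] [Module R N] (a : R) (ha : ∀ m : N, a • m = 0 → m = 0) (j : ℕ) :
    Module.length R (N ⧸ smt (a ^ j) N) = j * Module.length R (N ⧸ smt a N) := by
  induction j with
  | zero =>
    have : Subsingleton (N ⧸ smt (a ^ 0) N) := by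
      rw [Submodule.Quotient.subsingleton_iff, eq_top_iff]
      exact fun x _ => ⟨x, by simp⟩
    rw [Module.length_eq_zero]; simp
  | succ j ih =>
    let f : (N ⧸ smt (a ^ j) N) →ₗ[R] (N ⧸ smt (a ^ (j+1)) N) := Submodule.mapQ _ _ (LinearMap.lsmul R N a) (by
      rintro _ ⟨y, rfl⟩
      exact ⟨y, by simp only [LinearMap.lsmul_apply, pow_succ', mul_smul]⟩)
    let g : (N ⧸ smt (a ^ (j+1)) N) →ₗ[R] (N ⧸ smt a N) := Submodule.factor (by
      rintro _ ⟨y, rfl⟩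
      exact ⟨a ^ j • y, by simp only [LinearMap.lsmul_apply, pow_succ', mul_smul]⟩)
    have hf : ∀ x, f (Submodule.Quotient.mk x) = Submodule.Quotient.mk (a • x) := fun x => rfl
    have hg : ∀ x, g (Submodule.Quotient.mk x) = Submodule.Quotient.mk x := fun x => rfl
    rw [Module.length_eq_add_of_exact f g ?_ ?_ ?_, ih]
    · push_cast; ring
    · rw [← LinearMap.ker_eq_bot, LinearMap.ker_eq_bot']
      intro x hx
      obtain ⟨x, rfl⟩ := Submodule.Quotient.mk_surjective _ x
      rw [hf, Submodule.Quotient.mk_eq_zero] at hx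
      obtain ⟨y, hy⟩ := hx
      rw [Submodule.Quotient.mk_eq_zero]
      refine ⟨y, ?_⟩
      rw [← sub_eq_zero]
      apply ha
      simp only [LinearMap.lsmul_apply] at hy ⊢
      rw [smul_sub, ← mul_smul, ← pow_succ', hy, sub_self]
    · exact Submodule.factor_surjective _
    · intro x
      obtain ⟨x, rfl⟩ := Submodule.Quotient.mk_surjective _ x
      rw [hg, Submodule.Quotient.mk_eq_zero]
      constructor
      · rintro ⟨y, rfl⟩
        exact ⟨Submodule.Quotient.mk y, rfl⟩
      · rintro ⟨y, hy⟩
        obtain ⟨y, rfl⟩ := Submodule.Quotient.mk_surjective _ y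
        rw [hf, Submodule.Quotient.eq] at hy
        obtain ⟨z, hz⟩ := hy
        refine ⟨y - a ^ j • z, ?_⟩
        simp only [LinearMap.lsmul_apply] at hz ⊢
        rw [smul_sub, ← mul_smul, ← pow_succ', hz]; abel
end

section
variable {R : Type} [CommRing R] [IsLocalRing R] [IsNoetherianRing R]
  {p : Ideal R} {a : R} {d : ℕ} {H : Type} [AddCommGroup H] [Module R H] {ε : XT R H R d}

theorem pt_quot (p : Ideal R) : PT p (R ⧸ p) := fun m => by
  refine ⟨1, fun r hr => ?_⟩
  rw [pow_one] at hr
  obtain ⟨m, rfl⟩ := Ideal.Quotient.mk_surjective m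
  change Ideal.Quotient.mk _ (r * m) = 0
  rw [Ideal.Quotient.eq_zero_iff_mem]
  exact Ideal.mul_mem_right _ _ hr

theorem AuxCtx.nzd_quot (c : AuxCtx R p a (d+1)) (b : R) (hb : b ∉ p) (m : R ⧸ p) (hm : b • m = 0) : m = 0 := by
  obtain ⟨m, rfl⟩ := Ideal.Quotient.mk_surjective m
  change Ideal.Quotient.mk _ (b * m) = 0 at hm
  rw [Ideal.Quotient.eq_zero_iff_mem] at hm ⊢
  exact (c.prime.mem_or_mem hm).resolve_left hb

theorem AuxCtx.pow_notMem (c : AuxCtx R p a (d+1)) (k : ℕ) : a ^ k ∉ p := fun h => c.ap (c.prime.mem_of_pow_mem k h)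

theorem AuxCtx.finlen_quot (c : AuxCtx R p a (d+1)) (k : ℕ) : IsFiniteLength R ((R ⧸ p) ⧸ smt (a^k) (R ⧸ p)) := by
  refine c.finlen _ ((pt_quot p).of_surjective _ (Submodule.mkQ_surjective _)) k fun m => ?_
  obtain ⟨m, rfl⟩ := Submodule.Quotient.mk_surjective _ m
  rw [← Submodule.Quotient.mk_smul, Submodule.Quotient.mk_eq_zero]
  exact ⟨m, rfl⟩

/-- Hom(R/p,H) is Ext -/
theorem RepH.equiv (h : RepH R p d H ε) : Nonempty (((R ⧸ p) →ₗ[R] H) ≃ₗ[R] XT R (R ⧸ p) R d) :=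
  ⟨LinearEquiv.ofBijective
    { toFun := fun f : (R ⧸ p) →ₗ[R] H => xpull R f d ε
      map_add' := fun f g => xpull_add f g d ε
      map_smul' := fun r f => xpull_smul f r d ε } (h.bij _ (pt_quot p))⟩

theorem RepH.finite (h : RepH R p d H ε) : Module.Finite R ((R ⧸ p) →ₗ[R] H) := by
  obtain ⟨e⟩ := h.equiv
  have : Module.Finite R (XT R (R ⧸ p) R d) := ModuleCat.finite_ext R (ModuleCat.of R _) (ModuleCat.of R R) d
  exact Module.Finite.equiv e.symm

theorem RepH.length (h : RepH R p d H ε) (c : AuxCtx R p a (d+1)) (k : ℕ) :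
    Module.length R (((R ⧸ p) →ₗ[R] H) ⧸ smt (a^k) ((R ⧸ p) →ₗ[R] H)) = Module.length R ((R ⧸ p) ⧸ smt (a^k) (R ⧸ p)) := by
  obtain ⟨e⟩ := h.equiv
  let B := R ⧸ p
  have hinj : Function.Injective (LinearMap.lsmul R B (a^k)) := by
    rw [← LinearMap.ker_eq_bot, LinearMap.ker_eq_bot']; exact c.nzd_quot _ (c.pow_notMem k)
  obtain ⟨δ, d1, d2⟩ := (xt_les _ (smt (a^k) B).mkQ hinj (Submodule.mkQ_surjective _) (LinearMap.exact_map_mkQ_range _) R).2.2 d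
  have := c.xt_tf B (pt_quot p) (c.nzd_quot a c.ap) (d+1) (by omega)
  have hδ : Function.Surjective δ := fun z => (d2 z).1 (Subsingleton.elim _ _)
  rw [← (xt_finlen (d+1) c.h0 c.h1 _ (c.finlen_quot k)).2]
  refine LinearEquiv.length_eq (?_ ≪≫ₗ LinearMap.quotKerEquivOfSurjective (δ ∘ₗ e.toLinearMap) (hδ.comp e.surjective))
  refine Submodule.quotEquivOfEq _ _ ?_
  ext z
  rw [smt_mem, LinearMap.mem_ker, LinearMap.comp_apply, d1]
  constructor
  · rintro ⟨y, rfl⟩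
    exact ⟨e y, by rw [xpull_lsmul]; simp⟩
  · rintro ⟨y, hy⟩
    refine ⟨e.symm y, e.injective ?_⟩
    rw [xpull_lsmul] at hy
    simpa using hy

theorem RepH.nzd_hom (h : RepH R p d H ε) (c : AuxCtx R p a (d+1)) (b : R) (hb : b ∉ p) (w : (R ⧸ p) →ₗ[R] H)
    (hw : b • w = 0) : w = 0 := by
  ext1
  ext
  exact h.nzd' c b hb _ (LinearMap.congr_fun hw _)

theorem AuxCtx.length_ne_zero (c : AuxCtx R p a (d+1)) : Module.length R ((R ⧸ p) ⧸ smt a (R ⧸ p)) ≠ 0 := by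
  rw [Ne, Module.length_eq_zero_iff, Submodule.Quotient.subsingleton_iff]
  intro htop
  have h1 : (Ideal.Quotient.mk p 1) ∈ smt a (R ⧸ p) := by rw [htop]; trivial
  obtain ⟨y, hy⟩ := h1
  obtain ⟨y, rfl⟩ := Ideal.Quotient.mk_surjective y
  change Ideal.Quotient.mk p (a * y) = _ at hy
  rw [Ideal.Quotient.eq] at hy
  have h2 : p ≤ IsLocalRing.maximalIdeal R := IsLocalRing.le_maximalIdeal c.prime.ne_top
  have h3 := Ideal.sub_mem _ (Ideal.mul_mem_right y _ c.am) (h2 hy)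
  rw [sub_sub_cancel] at h3
  exact (Ideal.ne_top_iff_one _).1 (IsLocalRing.maximalIdeal.isMaximal R).ne_top h3

theorem RepH.exists_ne (h : RepH R p d H ε) (c : AuxCtx R p a (d+1)) : ∃ w : (R ⧸ p) →ₗ[R] H, w ≠ 0 := by
  by_contra! hcon
  have h1 := h.length c 1
  rw [pow_one] at h1
  apply c.length_ne_zero
  have : Subsingleton ((R ⧸ p) →ₗ[R] H) := subsingleton_of_forall_eq 0 hcon
  rw [← h1, Module.length_eq_zero_iff]
  exact (Submodule.mkQ_surjective _).subsingleton

theorem RepH.rank (h : RepH R p d H ε) (c : AuxCtx R p a (d+1)) (w₁ w₂ : (R ⧸ p) →ₗ[R] H) :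
    ∃ b₁ b₂ : R, ¬ (b₁ ∈ p ∧ b₂ ∈ p) ∧ b₁ • w₁ + b₂ • w₂ = 0 := by
  by_contra! hcon
  let B := R ⧸ p
  let V := B →ₗ[R] H
  have hfin : Module.Finite R V := h.finite
  have hkill : ∀ r ∈ p, ∀ w : V, r • w = 0 := fun r hr w => by
    ext1; ext
    change r • w (Submodule.Quotient.mk 1) = 0
    rw [← map_smul, ← Submodule.Quotient.mk_smul, (Submodule.Quotient.mk_eq_zero p).2, map_zero]
    simpa using hr
  let u : V → (B →ₗ[R] V) := fun w => Submodule.liftQ p (LinearMap.toSpanSingleton R V w) (fun r hr => hkill r hr w)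
  have hu : ∀ w r, u w (Submodule.Quotient.mk r) = r • w := fun w r => rfl
  let F : (B × B) →ₗ[R] V := LinearMap.coprod (u w₁) (u w₂)
  have hF : Function.Injective F := by
    rw [← LinearMap.ker_eq_bot, LinearMap.ker_eq_bot']
    rintro ⟨x, y⟩ hxy
    obtain ⟨x, rfl⟩ := Submodule.Quotient.mk_surjective _ x
    obtain ⟨y, rfl⟩ := Submodule.Quotient.mk_surjective _ y
    have hxy : x • w₁ + y • w₂ = 0 := by simpa [F, hu] using! hxy
    by_contra hne
    refine hcon x y (fun h1 h2 => hne ?_) hxy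
    exact Prod.ext ((Submodule.Quotient.mk_eq_zero p).2 h1) ((Submodule.Quotient.mk_eq_zero p).2 h2)
  obtain ⟨k, hk⟩ := Ideal.exists_pow_inf_eq_pow_smul (Ideal.span {a}) (LinearMap.range F)
  let ℓ := Module.length R (B ⧸ smt a B)
  have hB : ∀ j : ℕ, Module.length R (B ⧸ smt (a^j) B) = j * ℓ := aux_length_pow B a (c.nzd_quot a c.ap)
  let K := 2 * k + 1
  let ψ : (B × B) →ₗ[R] (B ⧸ smt (a ^ (k+1)) B) × (B ⧸ smt (a ^ (k+1)) B) := 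
    LinearMap.prodMap (Submodule.mkQ _) (Submodule.mkQ _)
  have hψ : Function.Surjective ψ := Function.Surjective.prodMap (Submodule.mkQ_surjective _) (Submodule.mkQ_surjective _)
  let χ : (B × B) →ₗ[R] V ⧸ smt (a ^ K) V := (Submodule.mkQ _) ∘ₗ F
  have hker : LinearMap.ker χ ≤ LinearMap.ker ψ := by
    intro x hx
    have hx1 : F x ∈ smt (a ^ K) V := (Submodule.Quotient.mk_eq_zero _).1 hx
    obtain ⟨y, hy⟩ := hx1
    have h2 : F x ∈ Ideal.span {a} ^ K • (⊤ : Submodule R V) ⊓ LinearMap.range F := by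
      refine ⟨?_, ⟨x, rfl⟩⟩
      rw [← hy]
      exact Submodule.smul_mem_smul (Ideal.pow_mem_pow (Ideal.mem_span_singleton_self a) K) trivial
    rw [hk K (by omega), show K - k = k + 1 by omega] at h2
    have h3 : F x ∈ (Ideal.span {a ^ (k+1)}) • LinearMap.range F := by
      rw [Ideal.span_singleton_pow] at h2
      exact Submodule.smul_mono le_rfl inf_le_right h2
    rw [Submodule.ideal_span_singleton_smul, Submodule.mem_smul_pointwise_iff_exists] at h3
    obtain ⟨_, ⟨z, rfl⟩, hz⟩ := h3
    rw [← map_smul] at hz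
    have := hF hz
    rw [← this]
    exact Prod.ext ((Submodule.Quotient.mk_eq_zero _).2 ⟨z.1, rfl⟩) ((Submodule.Quotient.mk_eq_zero _).2 ⟨z.2, rfl⟩)
  obtain ⟨g, hg⟩ := aux_factor χ ψ hker
  have hgs : Function.Surjective g := fun z => by
    obtain ⟨x, rfl⟩ := hψ z
    exact ⟨_, hg x⟩
  have l1 := Module.length_le_of_surjective g hgs
  have l2 := Module.length_le_of_injective (LinearMap.range χ).subtype (LinearMap.range χ).injective_subtype
  rw [h.length c K, hB] at l2
  rw [Module.length_prod, hB] at l1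
  have l3 := l1.trans l2
  have lfin : ℓ ≠ ⊤ := by
    have := c.finlen_quot 1
    rw [pow_one] at this
    exact Module.length_ne_top_iff.2 this
  have lne : ℓ ≠ 0 := c.length_ne_zero
  obtain ⟨v, hv⟩ := ENat.ne_top_iff_exists.1 lfin
  have hK : K = 2 * k + 1 := rfl
  rw [← hv, hK] at l3
  rw [← hv] at lne
  norm_cast at l3 lne
  have : 0 < v := Nat.pos_of_ne_zero lne
  nlinarith
end


section
variable {R : Type} [CommRing R]

theorem aux_socle {p : Ideal R} {M : Type} [AddCommGroup M] [Module R M] (h : PT p M) (x : M) (hx : x ≠ 0) :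
    ∃ r : R, r • x ≠ 0 ∧ ∀ s ∈ p, s • (r • x) = 0 := by
  classical
  have hex : ∃ t : ℕ, ∀ r ∈ p ^ t, r • x = 0 := h x
  have hs := Nat.find_spec hex
  have hm := fun k => Nat.find_min (m := k) hex
  generalize Nat.find hex = t at hs hm
  cases t with
  | zero => exact absurd (by simpa using hs 1 (by simp)) hx
  | succ k =>
    have := hm k (by omega)
    push Not at this
    obtain ⟨r, hr, hrx⟩ := this
    refine ⟨r, hrx, fun s hsp => ?_⟩
    rw [← mul_smul]
    exact hs _ (by rw [pow_succ']; exact Ideal.mul_mem_mul hsp hr)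

/-- map from a cyclic quotient -/
theorem aux_cyc (p : Ideal R) {M : Type} [AddCommGroup M] [Module R M] (x : M) (h : ∀ s ∈ p, s • x = 0) :
    ∃ w : (R ⧸ p) →ₗ[R] M, ∀ r, w (Ideal.Quotient.mk p r) = r • x :=
  ⟨Submodule.liftQ p (LinearMap.toSpanSingleton R M x) (fun r hr => h r hr), fun r => rfl⟩

/-- essential -/
def Ess {M : Type} [AddCommGroup M] [Module R M] (B : Submodule R M) : Prop :=
  ∀ x : M, x ≠ 0 → ∃ r : R, r • x ≠ 0 ∧ r • x ∈ B

theorem Ess.hull {M E : Type} [AddCommGroup M] [Module R M] [AddCommGroup E] [Module R E] {f : M →ₗ[R] E}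
    (h : Ess (LinearMap.range f)) (N : Submodule R E) (hN : N ≠ ⊥) : N ⊓ LinearMap.range f ≠ ⊥ := by
  obtain ⟨x, hx, hx0⟩ := (Submodule.ne_bot_iff _).1 hN
  obtain ⟨r, hr, hrm⟩ := h x hx0
  exact (Submodule.ne_bot_iff _).2 ⟨r • x, ⟨N.smul_mem r hx, hrm⟩, hr⟩

/-- an essential injective submodule is everything -/
theorem Ess.top {M : Type} [AddCommGroup M] [Module R M] {B : Submodule R M} (h : Ess B) [Module.Injective R B] : B = ⊤ := by
  obtain ⟨C, hC⟩ := aux_inj_compl B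
  have : C = ⊥ := by
    by_contra hne
    obtain ⟨x, hx, hx0⟩ := (Submodule.ne_bot_iff _).1 hne
    obtain ⟨r, hr, hrm⟩ := h x hx0
    exact hr (Submodule.disjoint_def.1 hC.disjoint _ hrm (C.smul_mem r hx))
  have h2 := hC.sup_eq_top
  rwa [this, sup_bot_eq] at h2

variable  [IsLocalRing R] [IsNoetherianRing R]
  {p : Ideal R} {a : R} {d : ℕ} {H : Type} [AddCommGroup H] [Module R H] {ε : XT R H R d}
  {E₀ : Type} [AddCommGroup E₀] [Module R E₀] {φ : H →ₗ[R] E₀}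

theorem LocD.ess (l : LocD R a H E₀ φ) : Ess (LinearMap.range φ) := fun e he => by
  obtain ⟨N, x, hx⟩ := l.frac e
  refine ⟨a ^ N, fun h0 => he ((l.bij N).1 ?_), ⟨x, hx.symm⟩⟩
  simpa using h0

theorem RepH.ne_one (w : (R ⧸ p) →ₗ[R] H) (hw : w ≠ 0) : w (Ideal.Quotient.mk p 1) ≠ 0 := fun h0 => by
  apply hw
  ext1; ext
  exact h0

theorem RepH.inj (h : RepH R p d H ε) (c : AuxCtx R p a (d+1)) (w : (R ⧸ p) →ₗ[R] H) (hw : w ≠ 0) :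
    Function.Injective w := by
  rw [← LinearMap.ker_eq_bot, LinearMap.ker_eq_bot']
  intro x hx
  obtain ⟨x, rfl⟩ := Ideal.Quotient.mk_surjective x
  rw [Ideal.Quotient.eq_zero_iff_mem]
  by_contra hxp
  apply RepH.ne_one w hw
  apply h.nzd' c x hxp
  rw [← map_smul, ← hx]
  congr 1
  change Ideal.Quotient.mk p (x * 1) = _
  rw [mul_one]

theorem RepH.ess (h : RepH R p d H ε) (c : AuxCtx R p a (d+1)) (w : (R ⧸ p) →ₗ[R] H) (hw : w ≠ 0) :
    Ess (LinearMap.range w) := fun x hx => by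
  obtain ⟨r, hr, hrp⟩ := aux_socle h.pt x hx
  obtain ⟨v, hv⟩ := aux_cyc p (r • x) hrp
  obtain ⟨b₁, b₂, hb, hrel⟩ := h.rank c w v
  have hrel1 : b₁ • w (Ideal.Quotient.mk p 1) + b₂ • r • x = 0 := by
    have := LinearMap.congr_fun hrel (Ideal.Quotient.mk p 1)
    rw [LinearMap.add_apply, LinearMap.smul_apply, LinearMap.smul_apply, hv, one_smul] at this
    simpa using this
  have hb2 : b₂ ∉ p := fun hb2 => by
    rw [hrp b₂ hb2, add_zero] at hrel1
    have hb1 : b₁ ∉ p := fun hb1 => hb ⟨hb1, hb2⟩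
    exact RepH.ne_one w hw (h.nzd' c b₁ hb1 _ hrel1)
  refine ⟨b₂ * r, fun h0 => hr (h.nzd' c b₂ hb2 _ (by rwa [← mul_smul])), ?_⟩
  rw [mul_smul]
  have : b₂ • r • x = w (-(b₁ • Ideal.Quotient.mk p 1)) := by
    rw [map_neg, map_smul]; exact eq_neg_of_add_eq_zero_right hrel1
  exact ⟨_, this.symm⟩

theorem Ess.comp {M N : Type} [AddCommGroup M] [Module R M] [AddCommGroup N] [Module R N]
    {f : M →ₗ[R] N} {g : N →ₗ[R] E₀} (hf : Ess (LinearMap.range f)) (hg : Ess (LinearMap.range g)) (hi : Function.Injective g) :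
    Ess (LinearMap.range (g ∘ₗ f)) := fun x hx => by
  obtain ⟨r, hr, ⟨y, hy⟩⟩ := hg x hx
  have hy0 : y ≠ 0 := fun h => hr (by rw [← hy, h, map_zero])
  obtain ⟨s, hs, ⟨z, hz⟩⟩ := hf y hy0
  have : g (s • y) = (s * r) • x := by rw [map_smul, hy, mul_smul]
  refine ⟨s * r, ?_, ⟨z, ?_⟩⟩
  · rw [← this]; exact fun h0 => hs (hi (by rw [h0, map_zero]))
  · rw [LinearMap.comp_apply, hz, this]

theorem LocD.not_surj (l : LocD R a H E₀ φ) (h : RepH R p d H ε) (c : AuxCtx R p a (d+1)) : ¬ Function.Surjective φ := fun hs => by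
  obtain ⟨w, hw⟩ := h.exists_ne c
  have hfin := h.finite
  have ha : ∀ x : H, ∃ y, a • y = x := fun x => by
    obtain ⟨e, he⟩ := (l.bij 1).2 (φ x)
    obtain ⟨y, rfl⟩ := hs e
    refine ⟨y, l.inj ?_⟩
    rw [map_smul]; simpa using he
  have hv : ∀ v : (R ⧸ p) →ₗ[R] H, ∃ u : (R ⧸ p) →ₗ[R] H, a • u = v := fun v => by
    obtain ⟨y, hy⟩ := ha (v (Ideal.Quotient.mk p 1))
    obtain ⟨u, hu⟩ := aux_cyc p y (fun s hs => h.nzd' c a c.ap _ (by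
      rw [smul_comm, hy, ← map_smul]
      convert map_zero v
      change Ideal.Quotient.mk p (s * 1) = _
      rw [mul_one, Ideal.Quotient.eq_zero_iff_mem]; exact hs))
    refine ⟨u, ?_⟩
    ext1; ext
    change a • u (Ideal.Quotient.mk p 1) = v (Ideal.Quotient.mk p 1)
    rw [hu, one_smul, hy]
  have : (⊤ : Submodule R ((R ⧸ p) →ₗ[R] H)) = ⊥ := by
    refine Submodule.eq_bot_of_le_smul_of_le_jacobson_bot (Ideal.span {a}) ⊤ Module.Finite.fg_top ?_ ?_
    · rintro v -
      obtain ⟨u, rfl⟩ := hv v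
      exact Submodule.smul_mem_smul (Ideal.mem_span_singleton_self a) trivial
    · rw [Ideal.span_singleton_le_iff_mem]
      exact IsLocalRing.maximalIdeal_le_jacobson ⊥ c.am
  exact hw ((Submodule.mem_bot R).1 (this ▸ (trivial : w ∈ (⊤ : Submodule R ((R ⧸ p) →ₗ[R] H)))))

theorem LocD.not_injective (l : LocD R a H E₀ φ) (h : RepH R p d H ε) (c : AuxCtx R p a (d+1)) : ¬ Module.Injective R H := fun hi => by
  apply l.not_surj h c
  have : Module.Injective R (LinearMap.range φ) := by
    let e := LinearEquiv.ofInjective φ l.inj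
    exact aux_retract e.symm.toLinearMap e.toLinearMap (fun x => by simp)
  exact LinearMap.range_eq_top.1 l.ess.top
end


section
variable {R : Type} [CommRing R] 

theorem aux_finsupp_injective [IsNoetherianRing R] (ι M : Type) [AddCommGroup M] [Module R M] [Module.Injective R M] :
    Module.Injective R (ι →₀ M) := by
  classical
  apply Module.Baer.injective
  intro I g
  obtain ⟨s, hs⟩ := (Module.Finite.fg_top : (⊤ : Submodule R I).FG)
  let S : Finset ι := s.biUnion (fun x => (g x).support)
  have hS : ∀ x : I, (g x).support ⊆ S := by
    have : (⊤ : Submodule R I) ≤ (Finsupp.supported M R (S : Set ι)).comap g := by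
      rw [← hs, Submodule.span_le]
      intro x hx
      change g x ∈ Finsupp.supported M R (S : Set ι)
      rw [Finsupp.mem_supported]
      intro i hi
      exact Finset.mem_biUnion.2 ⟨x, hx, hi⟩
    intro x
    have := this (trivial : x ∈ ⊤)
    exact_mod_cast (Finsupp.mem_supported R (g x)).1 this
  have hex : ∀ i, ∃ h : R →ₗ[R] M, ∀ x : I, h x = g x i := fun i => 
    Module.Injective.out I.subtype I.injective_subtype (Finsupp.lapply i ∘ₗ g)
  choose h hh using hex
  refine ⟨∑ i ∈ S, Finsupp.lsingle i ∘ₗ h i, fun x hx => ?_⟩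
  ext j
  simp only [LinearMap.sum_apply, LinearMap.comp_apply, Finsupp.finsetSum_apply, Finsupp.lsingle_apply, Finsupp.single_apply]
  rw [Finset.sum_ite_eq']
  split_ifs with hj
  · exact hh j ⟨x, hx⟩
  · have : j ∉ (g ⟨x, hx⟩).support := fun h => hj (hS _ h)
    exact (Finsupp.notMem_support_iff.1 this).symm

/-- zorn lemma for disjoint complement -/
theorem aux_max_disj {E : Type} [AddCommGroup E] [Module R E] (X : Submodule R E) :
    ∃ Y : Submodule R E, Disjoint X Y ∧ ∀ Z, Disjoint X Z → Y ≤ Z → Z = Y := by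
  obtain ⟨Y, -, hY⟩ := zorn_le_nonempty₀ {Y : Submodule R E | Disjoint X Y} (by
    intro c hc hch y hy
    refine ⟨sSup c, ?_, fun z hz => le_sSup hz⟩
    rw [Set.mem_ofPred_eq, Submodule.disjoint_def]
    intro x hx hxs
    obtain ⟨Z, hZ, hxZ⟩ := (Submodule.mem_sSup_of_directed ⟨y, hy⟩ hch.directedOn).1 hxs
    exact Submodule.disjoint_def.1 (hc hZ) x hx hxZ) ⊥ disjoint_bot_right
  exact ⟨Y, hY.1, fun Z hZ hle => le_antisymm (hY.2 hZ hle) hle⟩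

/-- relative essentiality -/
def EssIn {E : Type} [AddCommGroup E] [Module R E] (L X : Submodule R E) : Prop :=
  L ≤ X ∧ ∀ x ∈ X, x ≠ 0 → ∃ r : R, r • x ≠ 0 ∧ r • x ∈ L

theorem aux_max_ess {E : Type} [AddCommGroup E] [Module R E] (L : Submodule R E) :
    ∃ X : Submodule R E, EssIn L X ∧ ∀ Z, EssIn L Z → X ≤ Z → Z = X := by
  obtain ⟨Y, -, hY⟩ := zorn_le_nonempty₀ {Y : Submodule R E | EssIn L Y} (by
    intro c hc hch y hy
    refine ⟨sSup c, ⟨(hc hy).1.trans (le_sSup hy), ?_⟩, fun z hz => le_sSup hz⟩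
    intro x hxs
    obtain ⟨Z, hZ, hxZ⟩ := (Submodule.mem_sSup_of_directed ⟨y, hy⟩ hch.directedOn).1 hxs
    exact (hc hZ).2 x hxZ) L ⟨le_rfl, fun x hx h0 => ⟨1, by simpa using h0, by simpa using hx⟩⟩
  exact ⟨Y, hY.1, fun Z hZ hle => le_antisymm (hY.2 hZ hle) hle⟩

theorem aux_inj_hull {E : Type} [AddCommGroup E] [Module R E] [Module.Injective R E] (L : Submodule R E) :
    ∃ X : Submodule R E, EssIn L X ∧ Module.Injective R X := by
  obtain ⟨X, hX, hmax⟩ := aux_max_ess L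
  obtain ⟨Y, hY, hYmax⟩ := aux_max_disj X
  refine ⟨X, hX, ?_⟩
  -- X essential in E/Y
  have hq : ∀ e : E, e ∉ Y → ∃ r : R, ∃ x ∈ X, x ≠ 0 ∧ r • e - x ∈ Y := by
    intro e he
    have h1 : ¬ Disjoint X (Y ⊔ Submodule.span R {e}) := fun h => by
      have := hYmax _ h le_sup_left
      apply he
      rw [← this]
      exact (le_sup_right : _ ≤ Y ⊔ Submodule.span R {e}) (Submodule.mem_span_singleton_self e)
    rw [Submodule.disjoint_def] at h1
    push Not at h1
    obtain ⟨x, hx, hx2, hx0⟩ := h1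
    obtain ⟨y, hy, z, hz, hyz⟩ := Submodule.mem_sup.1 hx2
    obtain ⟨r, rfl⟩ := Submodule.mem_span_singleton.1 hz
    refine ⟨r, x, hx, hx0, ?_⟩
    rw [← hyz]
    simpa using hy
  obtain ⟨g, hg⟩ := aux_inj_factor (Y.mkQ ∘ₗ X.subtype) X.subtype (by
    intro x hx
    have hx : (x : E) ∈ Y := (Submodule.Quotient.mk_eq_zero _).1 hx
    have := Submodule.disjoint_def.1 hY x x.2 hx
    exact this)
  let G : E →ₗ[R] E := g ∘ₗ Y.mkQ
  have hGX : ∀ x ∈ X, G x = x := fun x hx => hg ⟨x, hx⟩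
  have hGY : ∀ y ∈ Y, G y = 0 := fun y hy => by
    change g (Y.mkQ y) = 0
    rw [Submodule.mkQ_apply, (Submodule.Quotient.mk_eq_zero _).2 hy, map_zero]
  have hGr : ∀ r e x, r • e - x ∈ Y → x ∈ X → r • G e = x := fun r e x h hx => by
    have := hGY _ h
    rw [map_sub, map_smul, sub_eq_zero, hGX x hx] at this
    exact this
  have hle : X ≤ LinearMap.range G := fun x hx => ⟨x, hGX x hx⟩
  have hR : LinearMap.range G = X := by
    refine hmax _ ⟨hX.1.trans hle, ?_⟩ hle
    rintro _ ⟨e, rfl⟩ hne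
    obtain ⟨r, x, hx, hx0, hrx⟩ := hq e (fun he => hne (hGY e he))
    obtain ⟨r', h1, h2⟩ := hX.2 x hx hx0
    refine ⟨r' * r, ?_⟩
    rw [mul_smul, hGr r e x hrx hx]
    exact ⟨h1, h2⟩
  exact aux_retract X.subtype (LinearMap.codRestrict X G (fun e => hR ▸ ⟨e, rfl⟩)) (fun x => Subtype.ext (hGX x x.2))

theorem aux_finsupp_pt {p : Ideal R} (ι M : Type) [AddCommGroup M] [Module R M] (h : PT p M) : PT p (ι →₀ M) := fun z => by
  choose t ht using h
  refine ⟨z.support.sup (fun i => t (z i)), fun r hr => ?_⟩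
  ext i
  rw [Finsupp.smul_apply, Finsupp.zero_apply]
  by_cases hi : i ∈ z.support
  · exact ht _ r (Ideal.pow_le_pow_right (Finset.le_sup (f := fun i => t (z i)) hi) hr)
  · rw [Finsupp.notMem_support_iff.1 hi, smul_zero]

theorem aux_decomp [IsLocalRing R] [IsNoetherianRing R] (E : Type) [AddCommGroup E] [Module R E] [Module.Injective R E]
    [Nontrivial E] (hE : PT (IsLocalRing.maximalIdeal R) E) :
    ∃ (Em : Type) (_ : AddCommGroup Em) (_ : Module R Em) (jm : (R ⧸ IsLocalRing.maximalIdeal R) →ₗ[R] Em) (s : Type),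
      (Module.Injective R Em ∧ Function.Injective jm ∧ Ess (LinearMap.range jm)) ∧ Nonempty s ∧ Nonempty (E ≃ₗ[R] (s →₀ Em)) := by
  classical
  let m := IsLocalRing.maximalIdeal R
  obtain ⟨x₀, hx₀⟩ := exists_ne (0 : E)
  obtain ⟨r₀, hr₀, hm₀⟩ := aux_socle hE x₀ hx₀
  obtain ⟨j, hj⟩ := aux_cyc m _ hm₀
  have hjinj : Function.Injective j := by
    rw [← LinearMap.ker_eq_bot, LinearMap.ker_eq_bot']
    intro x hx
    obtain ⟨x, rfl⟩ := Ideal.Quotient.mk_surjective x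
    rw [Ideal.Quotient.eq_zero_iff_mem]
    by_contra hxp
    have : IsUnit x := by simpa [m] using! hxp
    rw [hj] at hx
    exact hr₀ ((this.smul_eq_zero).1 hx)
  obtain ⟨X, ⟨hLX, hess⟩, hX⟩ := aux_inj_hull (LinearMap.range j)
  let jm : (R ⧸ m) →ₗ[R] X := LinearMap.codRestrict X j (fun c => hLX ⟨c, rfl⟩)
  have hjm : Function.Injective jm := fun u v huv => hjinj (congrArg Subtype.val huv)
  have hjess : Ess (LinearMap.range jm) := by
    intro x hx
    obtain ⟨r, h1, ⟨c, hc⟩⟩ := hess x x.2 (fun h => hx (Subtype.ext h))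
    exact ⟨r, fun h => h1 (congrArg Subtype.val h), ⟨c, Subtype.ext hc⟩⟩
  have hjsoc : ∀ y : X, (∀ s ∈ m, s • y = 0) → ∃ c, jm c = y := by
    intro y hy
    by_cases hy0 : y = 0
    · exact ⟨0, by rw [hy0, map_zero]⟩
    obtain ⟨r, h1, ⟨c, hc⟩⟩ := hjess y hy0
    have : IsUnit r := by
      by_contra hr
      exact h1 (hy r (by simpa [m] using! hr))
    obtain ⟨u, rfl⟩ := this
    refine ⟨(↑u⁻¹ : R) • c, ?_⟩
    rw [map_smul, hc, ← mul_smul]; simp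
  let Soc : Submodule R E := Submodule.torsionBySet R E m
  have hSoc : ∀ x, x ∈ Soc ↔ ∀ s ∈ m, s • x = 0 := fun x => by simp [Soc, Submodule.mem_torsionBySet_iff]
  let _ : Field (R ⧸ m) := Ideal.Quotient.field m
  obtain ⟨ι, ⟨b⟩⟩ : ∃ ι : Type, Nonempty (Module.Basis ι (R ⧸ m) Soc) :=
    ⟨_, ⟨Module.Basis.ofVectorSpace (R ⧸ m) Soc⟩⟩
  let k : ι → (R ⧸ m) →ₗ[R] E := fun i => Soc.subtype ∘ₗ ((LinearMap.toSpanSingleton (R ⧸ m) Soc (b i)).restrictScalars R)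
  have hg : ∀ i, ∃ g : X →ₗ[R] E, ∀ c, g (jm c) = k i c := fun i => Module.Injective.out jm hjm (k i)
  choose g hg using hg
  let G : (ι →₀ X) →ₗ[R] E := Finsupp.lsum R g
  have hGc : ∀ c : ι →₀ (R ⧸ m), G (c.mapRange jm (map_zero jm)) = ((b.repr.symm c : Soc) : E) := by
    intro c
    induction c using Finsupp.induction_linear with
    | zero => simp
    | add f g hf hg => rw [Finsupp.mapRange_add (fun x y => map_add jm x y), map_add, hf, hg]; simp
    | single i c => simp [G, hg, k]
  have hGinj : Function.Injective G := by
    rw [← LinearMap.ker_eq_bot, LinearMap.ker_eq_bot']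
    intro z hz
    by_contra hz0
    have hptX : PT m X := hE.of_injective X.subtype X.injective_subtype
    obtain ⟨r, hr, hrm⟩ := aux_socle (aux_finsupp_pt ι X hptX) z hz0
    have : ∀ i, ∃ c, jm c = (r • z) i := fun i => hjsoc _ (fun s hs => DFunLike.congr_fun (hrm s hs) i)
    choose c hc using this
    let C : ι →₀ (R ⧸ m) := Finsupp.onFinset (r • z).support c (fun i hi => by
      rw [Finsupp.mem_support_iff, ← hc]
      exact fun h => hi (hjm (by rw [h, map_zero])))
    have hC : C.mapRange jm (map_zero jm) = r • z := by
      ext1 i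
      rw [Finsupp.mapRange_apply]; exact hc i
    have h1 := hGc C
    rw [hC, map_smul, hz, smul_zero] at h1
    have h2 : C = 0 := by
      have := Subtype.ext (a1 := (b.repr.symm C : Soc)) (a2 := 0) h1.symm
      exact b.repr.symm.injective (this.trans (map_zero _).symm)
    apply hr
    rw [← hC, h2]; simp
  have hXf := aux_finsupp_injective (R := R) ι X
  have hGess : Ess (LinearMap.range G) := by
    intro x hx
    obtain ⟨r, hr, hrm⟩ := aux_socle hE x hx
    refine ⟨r, hr, ?_⟩
    have := hGc (b.repr ⟨r • x, (hSoc _).2 hrm⟩)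
    rw [LinearEquiv.symm_apply_apply] at this
    exact ⟨_, this⟩
  have : Module.Injective R (LinearMap.range G) := by
    let e := LinearEquiv.ofInjective G hGinj
    exact aux_retract e.symm.toLinearMap e.toLinearMap (fun x => by simp)
  have hsurj := LinearMap.range_eq_top.1 hGess.top
  refine ⟨X, inferInstance, inferInstance, jm, ι, ⟨hX, hjm, hjess⟩, ?_, ⟨(LinearEquiv.ofBijective G ⟨hGinj, hsurj⟩).symm⟩⟩
  by_contra hne
  rw [not_nonempty_iff] at hne
  obtain ⟨z, hz⟩ := hsurj x₀
  apply hx₀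
  rw [← hz, Subsingleton.elim z 0, map_zero]
end


section
variable {R : Type} [CommRing R]

theorem cat_h1 {C : Type*} [Category C] {A B A' B' : C} (h : A ⟶ A') (i : A' ≅ B') (i0 : A ≅ B) (k : B ⟶ B')
    (e : h ≫ i.hom = i0.hom ≫ k) : i0.inv ≫ h = k ≫ i.inv := by
  rw [Iso.inv_comp_eq, ← Category.assoc, ← e]; simp

theorem cat_h2 {C : Type*} [Category C] {A B D E F G : C} (a : A ⟶ B) (b : B ⟶ D) (c : A ⟶ G) (d : G ⟶ D)
    (e : D ⟶ E) (f : G ⟶ F) (g : F ⟶ E) (h : a ≫ b = c ≫ d) (h' : d ≫ e = f ≫ g) : a ≫ b ≫ e = (c ≫ f) ≫ g := by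
  rw [← Category.assoc, h, Category.assoc, h', Category.assoc]

/-- map of hom complexes -/
noncomputable def lyMap {P Q : ChainComplex (ModuleCat R) ℕ} (φ : P ⟶ Q) (Y : ModuleCat R) :
    Q.linearYonedaObj R Y ⟶ P.linearYonedaObj R Y :=
  (HomologicalComplex.unopFunctor _ _).map
    (((((linearYoneda R (ModuleCat R)).obj Y).rightOp.mapHomologicalComplex _).map φ).op)

theorem lyMap_f {P Q : ChainComplex (ModuleCat R) ℕ} (φ : P ⟶ Q) (Y : ModuleCat R) (n : ℕ) (f : Q.X n ⟶ Y) :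
    ((lyMap φ Y).f n).hom f = φ.f n ≫ f := rfl

theorem isoExt_nat {X X' : ModuleCat R} (g : X' ⟶ X) (P : ProjectiveResolution X) (P' : ProjectiveResolution X')
    (φ : ProjectiveResolution.Hom P' P g) (n : ℕ) (Y : ModuleCat R) :
    ((Ext R (ModuleCat R) n).map g.op).app Y ≫ (P'.isoExt n Y).hom =
      (P.isoExt n Y).hom ≫ HomologicalComplex.homologyMap (lyMap φ.hom Y) n := by
  let F := ((linearYoneda R (ModuleCat R)).obj Y).rightOp
  have h1 := ProjectiveResolution.isoLeftDerivedObj_inv_naturality g P' P φ.hom (by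
    have := φ.hom_f_zero_comp_π_f_zero
    simpa using! this) F n
  have h2 := congrArg Quiver.Hom.unop h1
  have h3 : (HomologicalComplex.homologyMap ((HomologicalComplex.opFunctor _ _).map (lyMap φ.hom Y).op) n).unop ≫
      ((P'.complex.linearYonedaObj R Y).homologyOp n).inv.unop =
      ((P.complex.linearYonedaObj R Y).homologyOp n).inv.unop ≫ HomologicalComplex.homologyMap (lyMap φ.hom Y) n := by
    have h3 := HomologicalComplex.homologyOp_hom_naturality (lyMap φ.hom Y) n
    exact congrArg Quiver.Hom.unop (cat_h1 _ _ _ _ h3)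
  change ((F.leftDerived n).map g).unop ≫ (P'.isoLeftDerivedObj F n).inv.unop ≫ 
    ((P'.complex.linearYonedaObj R Y).homologyOp n).inv.unop = 
      ((P.isoLeftDerivedObj F n).inv.unop ≫ ((P.complex.linearYonedaObj R Y).homologyOp n).inv.unop) ≫ _
  exact cat_h2 _ _ _ _ _ _ _ h2 h3
end


section
variable {R : Type} [CommRing R]

theorem aux_homology_zero (K : CochainComplex (ModuleCat R) ℕ) (i n : ℕ) (hi : (ComplexShape.up ℕ).prev n = i) (z : K.cycles n) :
    (K.homologyπ n).hom z = 0 ↔ ∃ w : K.X i, (K.d i n).hom w = (K.iCycles n).hom z := by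
  have h1 : (ShortComplex.mk (K.toCycles i n) (K.homologyπ n) (K.toCycles_comp_homologyπ i n)).Exact :=
    ShortComplex.exact_of_g_is_cokernel _ (K.homologyIsCokernel i n hi)
  rw [ShortComplex.moduleCat_exact_iff] at h1
  have hinj : Function.Injective (K.iCycles n).hom := (ModuleCat.mono_iff_injective _).1 inferInstance
  have hcomp : ∀ w, (K.iCycles n).hom ((K.toCycles i n).hom w) = (K.d i n).hom w := fun w => by
    rw [← K.toCycles_i i n]; rfl
  constructor
  · intro hz
    obtain ⟨w, hw⟩ := h1 z hz
    exact ⟨w, by rw [← hcomp]; exact congrArg _ hw⟩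
  · rintro ⟨w, hw⟩
    have : (K.toCycles i n).hom w = z := hinj (by rw [hcomp, hw])
    rw [← this]
    exact congrArg (fun q => q.hom w) (K.toCycles_comp_homologyπ i n)

variable {X : ModuleCat R} (P : ProjectiveResolution X) (Y : ModuleCat R) (n : ℕ)

theorem aux_cyc_d (z : (P.complex.linearYonedaObj R Y).cycles n) :
    P.complex.d (n+1) n ≫ (show P.complex.X n ⟶ Y from ((P.complex.linearYonedaObj R Y).iCycles n).hom z) = 0 := 
  congrArg (fun q => q.hom z) ((P.complex.linearYonedaObj R Y).iCycles_d n (n+1))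

theorem extMk_zero_iff (f : P.complex.X n ⟶ Y) (hf : P.complex.d (n+1) n ≫ f = 0) (i : ℕ) (hi : (ComplexShape.up ℕ).prev n = i) :
    P.extMk f (n+1) rfl hf = 0 ↔ ∃ g : P.complex.X i ⟶ Y, P.complex.d n i ≫ g = f := by
  cases n with
  | succ p =>
    have : i = p := by rw [← hi]; simp
    subst this
    exact P.extMk_eq_zero_iff f _ rfl hf i rfl
  | zero =>
    have : i = 0 := by rw [← hi]; simp
    subst this
    constructor
    · intro h0
      refine ⟨0, ?_⟩
      rw [← P.extEquivCohomologyClass.apply_eq_iff_eq,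
        ProjectiveResolution.extEquivCohomologyClass_extMk, ProjectiveResolution.extEquivCohomologyClass_zero,
        CochainComplex.HomComplex.CohomologyClass.mk_eq_zero_iff] at h0
      rw [CochainComplex.HomComplex.Cocycle.toSingleMk_mem_coboundaries_iff _ _ _ _ _ 1 (by simp)] at h0
      obtain ⟨g, hg⟩ := h0
      have hz : P.cochainComplex.d (-((0:ℕ):ℤ)) 1 = 0 := 
        (P.cochainComplex.isZero_of_isStrictlyLE 0 1 (by simp)).eq_of_tgt _ _
      rw [hz, Limits.zero_comp] at hg
      rw [Limits.comp_zero, ← cancel_epi (P.cochainComplexXIso (-((0:ℕ):ℤ)) 0 rfl).hom, ← hg, Limits.comp_zero]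
    · rintro ⟨g, rfl⟩
      have : P.complex.d 0 0 = 0 := P.complex.shape _ _ (by simp)
      simp

theorem extMk_congr {f g : P.complex.X n ⟶ Y} (h : f = g) (hf : P.complex.d (n+1) n ≫ f = 0) (hg : P.complex.d (n+1) n ≫ g = 0) :
    P.extMk f (n+1) rfl hf = P.extMk g (n+1) rfl hg := by subst h; rfl

theorem smul_extMk (r : R) (f : P.complex.X n ⟶ Y) (hf : P.complex.d (n+1) n ≫ f = 0)  :
    P.extMk (r • f) (n+1) rfl (by simp [hf]) = r • P.extMk f (n+1) rfl hf := by
  have := P.extMk_comp_mk₀ f (n+1) rfl hf (r • 𝟙 Y)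
  rw [Abelian.Ext.mk₀_smul, Abelian.Ext.comp_smul, Abelian.Ext.comp_mk₀_id] at this
  rw [this]
  simp

theorem exists_extIso : ∃ e : ((Ext R (ModuleCat R) n).obj (op X)).obj Y ≃ₗ[R] Abelian.Ext X Y n,
    ∀ z, e ((P.isoExt n Y).inv.hom (((P.complex.linearYonedaObj R Y).homologyπ n).hom z)) =
      P.extMk (show P.complex.X n ⟶ Y from ((P.complex.linearYonedaObj R Y).iCycles n).hom z) (n+1) rfl (aux_cyc_d P Y n z) := by
  let K := P.complex.linearYonedaObj R Y
  let α : K.cycles n →ₗ[R] Abelian.Ext X Y n := 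
    { toFun := fun z => P.extMk (show P.complex.X n ⟶ Y from (K.iCycles n).hom z) (n+1) rfl (aux_cyc_d P Y n z)
      map_add' := fun z w => by
        rw [ProjectiveResolution.add_extMk]
        congr 1
        exact map_add (K.iCycles n).hom z w
      map_smul' := fun r z => by
        rw [RingHom.id_apply, ← smul_extMk]
        congr 1
        exact map_smul (K.iCycles n).hom r z }
  have hker : LinearMap.ker (K.homologyπ n).hom = LinearMap.ker α := by
    ext z
    rw [LinearMap.mem_ker, LinearMap.mem_ker, aux_homology_zero K _ n rfl]
    exact (extMk_zero_iff P Y n _ (aux_cyc_d P Y n z) _ rfl).symm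
  have hsurj : Function.Surjective (K.homologyπ n).hom := (ModuleCat.epi_iff_surjective _).1 inferInstance
  have hα : Function.Surjective α := by
    intro c
    obtain ⟨f, hf, rfl⟩ := P.extMk_surjective c (n+1) rfl
    have h1 : (ShortComplex.mk (K.iCycles n) (K.d n (n+1)) (K.iCycles_d n (n+1))).Exact :=
      ShortComplex.exact_of_f_is_kernel _ (K.cyclesIsKernel n (n+1) (by simp))
    rw [ShortComplex.moduleCat_exact_iff] at h1
    obtain ⟨z, hz⟩ := h1 f hf
    refine ⟨z, ?_⟩
    exact extMk_congr P Y n hz (aux_cyc_d P Y n z) hf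
  let e1 : (K.cycles n ⧸ LinearMap.ker (K.homologyπ n).hom) ≃ₗ[R] K.homology n := 
    LinearMap.quotKerEquivOfSurjective _ hsurj
  let e2 := LinearMap.quotKerEquivOfSurjective _ hα
  refine ⟨(P.isoExt n Y).toLinearEquiv ≪≫ₗ e1.symm ≪≫ₗ Submodule.quotEquivOfEq _ _ hker ≪≫ₗ e2, fun z => ?_⟩
  have h1 : (P.isoExt n Y).toLinearEquiv ((P.isoExt n Y).inv.hom ((K.homologyπ n).hom z)) = (K.homologyπ n).hom z := 
    congrArg (fun q => q.hom ((K.homologyπ n).hom z)) (P.isoExt n Y).inv_hom_id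
  have h2 : e1.symm ((K.homologyπ n).hom z) = Submodule.Quotient.mk z := by
    rw [LinearEquiv.symm_apply_eq]; rfl
  rw [LinearEquiv.trans_apply, LinearEquiv.trans_apply, LinearEquiv.trans_apply]
  erw [h1, h2]
  rfl

/-- comparison of the two Ext -/
noncomputable def extIso : ((Ext R (ModuleCat R) n).obj (op X)).obj Y ≃ₗ[R] Abelian.Ext X Y n := (exists_extIso P Y n).choose

theorem extIso_nat {X' : ModuleCat R} (P' : ProjectiveResolution X') (g : X' ⟶ X)
    (c : ((Ext R (ModuleCat R) n).obj (op X)).obj Y) :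
    extIso P' Y n ((((Ext R (ModuleCat R) n).map g.op).app Y).hom c) =
      (Abelian.Ext.mk₀ g).comp (extIso P Y n c) (zero_add n) := by
  let K := P.complex.linearYonedaObj R Y
  let K' := P'.complex.linearYonedaObj R Y
  have hφ : Nonempty (ProjectiveResolution.Hom P' P g) :=
    ⟨{ hom := ProjectiveResolution.lift g P' P
       hom_f_zero_comp_π_f_zero := by
         have := ProjectiveResolution.lift_commutes_zero g P' P
         simpa using! this }⟩
  obtain ⟨φ⟩ := hφ
  have hsurj : Function.Surjective (K.homologyπ n).hom := (ModuleCat.epi_iff_surjective _).1 inferInstance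
  obtain ⟨z, hz⟩ := hsurj ((P.isoExt n Y).hom.hom c)
  have hc : c = (P.isoExt n Y).inv.hom ((K.homologyπ n).hom z) := by
    rw [hz]
    exact (congrArg (fun q => q.hom c) (P.isoExt n Y).hom_inv_id).symm
  have h1 : (((Ext R (ModuleCat R) n).map g.op).app Y).hom c =
      (P'.isoExt n Y).inv.hom ((K'.homologyπ n).hom ((HomologicalComplex.cyclesMap (lyMap φ.hom Y) n).hom z)) := by
    have e1 : (P'.isoExt n Y).hom.hom ((((Ext R (ModuleCat R) n).map g.op).app Y).hom c) =
        (HomologicalComplex.homologyMap (lyMap φ.hom Y) n).hom ((P.isoExt n Y).hom.hom c) :=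
      congrArg (fun q => q.hom c) (isoExt_nat g P P' φ n Y)
    rw [← hz] at e1
    have e2 : (HomologicalComplex.homologyMap (lyMap φ.hom Y) n).hom ((K.homologyπ n).hom z) = 
        (K'.homologyπ n).hom ((HomologicalComplex.cyclesMap (lyMap φ.hom Y) n).hom z) :=
      congrArg (fun q => q.hom z) (HomologicalComplex.homologyπ_naturality (lyMap φ.hom Y) n)
    rw [← e2, ← e1]
    exact (congrArg (fun q => q.hom ((((Ext R (ModuleCat R) n).map g.op).app Y).hom c)) (P'.isoExt n Y).hom_inv_id).symm
  rw [h1, hc]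
  have e3 := (exists_extIso P' Y n).choose_spec ((HomologicalComplex.cyclesMap (lyMap φ.hom Y) n).hom z)
  have e4 := (exists_extIso P Y n).choose_spec z
  refine e3.trans ?_
  refine Eq.trans ?_ (congrArg (fun q => (Abelian.Ext.mk₀ g).comp q (zero_add n)) e4).symm
  refine Eq.trans ?_ (ProjectiveResolution.mk₀_comp_extMk _ (n+1) rfl (aux_cyc_d P Y n z) φ).symm
  refine extMk_congr _ _ _ ?_ _ _
  exact congrArg (fun q => q.hom z) (HomologicalComplex.cyclesMap_i (lyMap φ.hom Y) n)
end


section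
variable {R : Type} [CommRing R] {p : Ideal R} {d : ℕ} {H : Type} [AddCommGroup H] [Module R H] {ε : XT R H R d}

/-- the representing map as linear equivalence -/
noncomputable def RepH.le (h : RepH R p d H ε) (X : Type) [AddCommGroup X] [Module R X] (hX : PT p X) :
    (X →ₗ[R] H) ≃ₗ[R] XT R X R d :=
  LinearEquiv.ofBijective
    { toFun := fun f => xpull R f d ε
      map_add' := fun f g => xpull_add f g d ε
      map_smul' := fun r f => by
        rw [RingHom.id_apply]
        exact xpull_smul f r d ε } (h.bij X hX)

theorem RepH.le_apply (h : RepH R p d H ε) (X : Type) [AddCommGroup X] [Module R X] (hX : PT p X) (f : X →ₗ[R] H) :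
    h.le X hX f = xpull R f d ε := rfl

/-- the component of the comparison map -/
noncomputable def RepH.comp (h : RepH R p d H ε) (t : ℕ) :
    ((Ext R (ModuleCat R) d).obj (op (ModuleCat.of R (R ⧸ p ^ t)))).obj (ModuleCat.of R R) →ₗ[R] H :=
  LinearMap.applyₗ (Ideal.Quotient.mk (p^t) 1) ∘ₗ
    ((extIso (projectiveResolution (ModuleCat.of R (R ⧸ p ^ t))) (ModuleCat.of R R) d).trans
      (h.le (R ⧸ p ^ t) (pt_quot_pow p t)).symm).toLinearMap

theorem RepH.comp_spec (h : RepH R p d H ε) (t : ℕ) (c) (f : (R ⧸ p ^ t) →ₗ[R] H)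
    (hf : xpull R f d ε = extIso (projectiveResolution (ModuleCat.of R (R ⧸ p ^ t))) (ModuleCat.of R R) d c) :
    h.comp t c = f (Ideal.Quotient.mk _ 1) := by
  have : (h.le (R ⧸ p ^ t) (pt_quot_pow p t)).symm (extIso (projectiveResolution (ModuleCat.of R (R ⧸ p ^ t))) (ModuleCat.of R R) d c) = f := by
    rw [LinearEquiv.symm_apply_eq, ← hf]; rfl
  rw [← this]; rfl

theorem RepH.comp_exists (h : RepH R p d H ε) (t : ℕ) (c) : ∃ (f : (R ⧸ p ^ t) →ₗ[R] H),
    xpull R f d ε = extIso (projectiveResolution (ModuleCat.of R (R ⧸ p ^ t))) (ModuleCat.of R R) d c :=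
  (h.bij _ (pt_quot_pow p t)).2 _

theorem RepH.comp_nat (h : RepH R p d H ε) (t t' : ℕ) (g : (R ⧸ p ^ t') →ₗ[R] (R ⧸ p ^ t)) 
    (hg : g (Ideal.Quotient.mk _ 1) = Ideal.Quotient.mk _ 1)
    (c : ((Ext R (ModuleCat R) d).obj (op (ModuleCat.of R (R ⧸ p ^ t)))).obj (ModuleCat.of R R)) :
    h.comp t' ((((Ext R (ModuleCat R) d).map (ModuleCat.ofHom g).op).app (ModuleCat.of R R)).hom c) = h.comp t c := by
  obtain ⟨f, hf⟩ := h.comp_exists t c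
  rw [h.comp_spec t c f hf, h.comp_spec t' _ (f ∘ₗ g), LinearMap.comp_apply, hg]
  rw [xpull_comp, hf, xpull_apply]
  exact (extIso_nat _ _ _ _ _ _).symm

theorem RepH.comp_inj (h : RepH R p d H ε) (t : ℕ) : Function.Injective (h.comp t) := by
  rw [injective_iff_map_eq_zero]
  intro c hc
  obtain ⟨f, hf⟩ := h.comp_exists t c
  rw [h.comp_spec t c f hf] at hc
  have : f = 0 := by
    ext
    simpa using hc
  rw [this, xpull_zero] at hf
  exact (LinearEquiv.map_eq_zero_iff _).1 hf.symm

theorem RepH.comp_surj (h : RepH R p d H ε) (x : H) : ∃ t c, h.comp t c = x := by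
  obtain ⟨t, ht⟩ := h.pt x
  obtain ⟨w, hw⟩ := aux_cyc (p ^ t) x ht
  refine ⟨t, (extIso (projectiveResolution (ModuleCat.of R (R ⧸ p ^ t))) (ModuleCat.of R R) d).symm (xpull R w d ε), ?_⟩
  rw [h.comp_spec t _ w (by simp), hw, one_smul]

theorem RepH.locCoh (h : RepH R p d H ε) : 
    Nonempty ((localCohomology p d).obj (ModuleCat.of R R) ≃ₗ[R] H) := by
  let F : (ℕᵒᵖ)ᵒᵖ ⥤ ModuleCat R := localCohomology.diagram (localCohomology.idealPowersDiagram p) d ⋙ 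
    (evaluation (ModuleCat R) (ModuleCat R)).obj (ModuleCat.of R R)
  have := localCohomology.hasColimitDiagram.{0,0} (localCohomology.idealPowersDiagram p) d
  let c0 : Limits.Cocone F := ((evaluation (ModuleCat R) (ModuleCat R)).obj (ModuleCat.of R R)).mapCocone
    (Limits.colimit.cocone (localCohomology.diagram (localCohomology.idealPowersDiagram p) d))
  have hc0 : Limits.IsColimit c0 := Limits.isColimitOfPreserves _ (Limits.colimit.isColimit _)
  let c1 : Limits.Cocone F :=
    { pt := ModuleCat.of R H
      ι := { app := fun t => ModuleCat.ofHom (h.comp t.unop.unop)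
             naturality := fun t t' g => by
              refine ModuleCat.hom_ext (LinearMap.ext fun c => ?_)
              exact h.comp_nat _ _ _ rfl c } }
  let D := hc0.desc c1
  have hD : ∀ t c, D.hom ((c0.ι.app t).hom c) = h.comp t.unop.unop c := fun t c =>
    congrArg (fun q => q.hom c) (hc0.fac c1 t)
  refine ⟨LinearEquiv.ofBijective (M := c0.pt) D.hom ⟨?_, ?_⟩⟩
  · rw [injective_iff_map_eq_zero]
    intro y hy
    obtain ⟨t, c, rfl⟩ := Limits.Concrete.isColimit_exists_rep _ hc0 y
    have h1 : h.comp t.unop.unop c = 0 := (hD t c).symm.trans hy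
    have : c = 0 := h.comp_inj _ (h1.trans (map_zero _).symm)
    rw [this]
    exact map_zero (c0.ι.app t).hom
  · intro x
    obtain ⟨t, c, hc⟩ := h.comp_surj x
    have h2 := hD (op (op t)) c
    have h3 : h.comp (op (op t)).unop.unop c = x := hc
    exact Exists.intro _ (Eq.trans h2 h3)
end


section
variable {R : Type} [CommRing R] {L E : Type} [AddCommGroup L] [Module R L] [AddCommGroup E] [Module R E]

theorem aux_old_ext {X Y : ModuleCat R} (i : ℕ) (h : Subsingleton (Abelian.Ext X Y i)) :
    Subsingleton (((Ext R (ModuleCat R) i).obj (op X)).obj Y) :=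
  (extIso (projectiveResolution X) Y i).toEquiv.subsingleton

theorem aux_new_ext {X Y : ModuleCat R} (i : ℕ) (h : Subsingleton (((Ext R (ModuleCat R) i).obj (op X)).obj Y)) :
    Subsingleton (Abelian.Ext X Y i) :=
  (extIso (projectiveResolution X) Y i).symm.toEquiv.subsingleton

theorem aux_injdim_two (φ : L →ₗ[R] E) (hφ : Function.Injective φ) [Module.Injective R E]
    [Module.Injective R (E ⧸ LinearMap.range φ)] (X : Type) [AddCommGroup X] [Module R X] (i : ℕ) :
    Subsingleton (XT R X L (i+1+1)) := by
  obtain ⟨δ, hδ⟩ := xt_cov φ (LinearMap.range φ).mkQ hφ (Submodule.mkQ_surjective _) (LinearMap.exact_map_mkQ_range φ)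
  have h1 : Subsingleton (XT R X E (i+1+1)) := xt_injective _
  have h2 : Subsingleton (XT R X (E ⧸ LinearMap.range φ) (i+1)) := xt_injective _
  refine subsingleton_of_forall_eq 0 fun x => ?_
  obtain ⟨y, rfl⟩ := ((hδ X (i+1)).2 x).1 (h1.elim _ _)
  rw [h2.elim y 0]
  simp

theorem aux_injective_of_ext (h : ∀ X : ModuleCat R, Subsingleton (Abelian.Ext X (ModuleCat.of R L) 1)) :
    Module.Injective R L := by
  rw [Module.injective_iff_injective_object, injective_iff_subsingleton_ext_one]
  exact fun X => h X

theorem aux_loc_injective [IsNoetherianRing R] (φ : L →ₗ[R] E) (hφ : Function.Injective φ) [Module.Injective R E]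
    (t : Ideal R) [t.IsPrime] (ht : ∀ e : E, ∃ u, u ∉ t ∧ u • e ∈ LinearMap.range φ) :
    Module.Injective (Localization.AtPrime t) (LocalizedModule t.primeCompl L) := by
  let S := t.primeCompl
  let mk := LocalizedModule.mkLinearMap S E
  let f : L →ₗ[R] LocalizedModule S E := mk ∘ₗ φ
  have hf : IsLocalizedModule S f :=
    { map_units := IsLocalizedModule.map_units mk
      surj := fun y => by
        obtain ⟨⟨e, s⟩, hs⟩ := IsLocalizedModule.surj S mk y
        obtain ⟨u, hu, ⟨x, hx⟩⟩ := ht e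
        refine ⟨⟨x, ⟨u, hu⟩ * s⟩, ?_⟩
        change _ = mk (φ x)
        rw [hx, map_smul, ← hs, mul_smul]
        rfl
      exists_of_eq := fun {x y} hxy => by
        obtain ⟨c, hc⟩ := IsLocalizedModule.exists_of_eq (S := S) (f := mk) hxy
        refine ⟨c, hφ ?_⟩
        have h1 : φ (c.1 • x) = φ (c.1 • y) := by
          rw [map_smul, map_smul]; exact hc
        exact h1 }
  have hE : Module.Injective (Localization.AtPrime t) (LocalizedModule S E) :=
    Module.injective_of_isLocalizedModule S mk
  let e := IsLocalizedModule.linearEquiv S (LocalizedModule.mkLinearMap S L) f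
  let e' := LinearEquiv.extendScalarsOfIsLocalization S (Localization.AtPrime t) e
  exact aux_retract e'.toLinearMap e'.symm.toLinearMap (fun x => by simp)

end


theorem aux_height_prime (R : Type) [CommRing R] (p : Ideal R) [hp : p.IsPrime] :
    idealHeight R p = Order.height (⟨p, hp⟩ : PrimeSpectrum R) := by
  apply le_antisymm
  · exact sInf_le ⟨⟨p, hp⟩, le_refl _, rfl⟩
  · refine le_sInf ?_
    rintro h ⟨q, hq, rfl⟩
    exact Order.height_mono hq

theorem aux_ctx (R : Type) [CommRing R] [IsLocalRing R] [IsNoetherianRing R] (s : Finset R)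
    (hs : Ideal.span (s:Set R) = IsLocalRing.maximalIdeal R) (d : ℕ) (hcard : s.card = d + 1)
    (hdim : ringKrullDim R = ((d + 1 : ℕ) : WithBot ℕ∞)) (p : Ideal R) [hp : p.IsPrime]
    (hh : Order.height (⟨p, hp⟩ : PrimeSpectrum R) = (d : ℕ∞)) : ∃ a, AuxCtx R p a (d+1) := by
  have hm : Order.height (IsLocalRing.closedPoint R) = ((d + 1 : ℕ) : ℕ∞) := by
    have h1 := IsLocalRing.maximalIdeal_height_eq_ringKrullDim (R := R)
    have h2 := PrimeSpectrum.height_eq_orderHeight (IsLocalRing.closedPoint R)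
    rw [← h2]
    rw [hdim] at h1
    exact_mod_cast h1
  have hpm : p ≠ IsLocalRing.maximalIdeal R := by
    rintro rfl
    have h1 : ((d + 1 : ℕ) : ℕ∞) = (d : ℕ∞) := hm.symm.trans hh
    have h2 : d + 1 = d := by exact_mod_cast h1
    omega
  have hle := IsLocalRing.le_maximalIdeal hp.ne_top
  obtain ⟨a, ham, hap⟩ := SetLike.exists_of_lt (lt_of_le_of_ne hle hpm)
  have hr := xt_residue R s hs (d+1) hcard hdim
  refine ⟨a, ⟨hp, ham, hap, ?_, by omega, hr.1, hr.2⟩⟩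
  intro q hq hpq
  by_contra! hcon
  have hqm : (⟨q, hq⟩ : PrimeSpectrum R) < IsLocalRing.closedPoint R :=
    lt_of_le_of_ne (IsLocalRing.le_maximalIdeal hq.ne_top) (fun h => hcon.2 (congrArg PrimeSpectrum.asIdeal h))
  have hpq' : (⟨p, hp⟩ : PrimeSpectrum R) < ⟨q, hq⟩ :=
    lt_of_le_of_ne hpq (fun h => hcon.1 (congrArg PrimeSpectrum.asIdeal h).symm)
  have h1 : Order.height (⟨q, hq⟩ : PrimeSpectrum R) < ⊤ :=
    lt_of_le_of_lt (Order.height_mono hqm.le) (by rw [hm]; exact ENat.natCast_lt_top _)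
  have h2 := Order.height_strictMono hqm h1
  have h3 := Order.height_strictMono hpq' (lt_of_le_of_lt (Order.height_mono hpq'.le) h1)
  rw [hh] at h3
  rw [hm] at h2
  obtain ⟨k, hk⟩ := ENat.ne_top_iff_exists.1 h1.ne
  rw [← hk] at h2 h3
  have h4 : k < d + 1 := by exact_mod_cast h2
  have h5 : d < k := by exact_mod_cast h3
  omega

/-- Regular local ring `(R, m)` of dimension `n ≥ 1` containing a field,
`p` a prime of height `n - 1`.  Then there is a short exact sequence
`0 → H_p^{n-1}(R) → E_R(R/p) → E → 0`, where the middle term is an injective hull of `R/p`,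
the first map realizes it as an injective hull of `H_p^{n-1}(R)`, and `E` is a nonzero
direct sum of copies of `E_R(R/m)`; in particular `inj.dim H_p^{n-1}(R) = 1` and
`μ^1(t, H_p^{n-1}(R)) = 0` for every prime `t ≠ m`. -/
theorem stmt16 (R : Type) [CommRing R] [IsLocalRing R]
    (hreg : IsRegularLocal R) (hfield : ContainsField R)
    (n : ℕ) (hn : 1 ≤ n) (hdim : ringKrullDim R = (n : WithBot ℕ∞))
    (p : Ideal R) [p.IsPrime] (hp : idealHeight R p = ((n - 1 : ℕ) : ℕ∞)) :
    (∃ (E₀ E Em : ModuleCat R)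
        (j : (R ⧸ p) →ₗ[R] E₀)
        (ι : LocalCohomologyMod R p (n - 1) →ₗ[R] E₀)
        (π : E₀ →ₗ[R] E)
        (jm : (R ⧸ IsLocalRing.maximalIdeal R) →ₗ[R] Em)
        (s : Type),
        IsInjectiveHull R j ∧ IsInjectiveHull R ι ∧
          Function.Surjective π ∧ LinearMap.ker π = LinearMap.range ι ∧
          IsInjectiveHull R jm ∧ Nonempty s ∧ Nonempty (E ≃ₗ[R] (s →₀ Em))) ∧
      injDim R (LocalCohomologyMod R p (n - 1)) = (1 : ℕ∞) ∧
      ∀ (t : Ideal R) (ht : t.IsPrime), t ≠ IsLocalRing.maximalIdeal R →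
        ¬ @BassNumberNonzero R _ t ht (LocalCohomologyMod R p (n - 1)) _ _ 1 := by
  obtain ⟨hnoeth, s, hs, hcard⟩ := hreg
  obtain ⟨d, rfl⟩ : ∃ d, n = d + 1 := ⟨n - 1, by omega⟩
  have hcard' : s.card = d + 1 := by
    rw [hdim] at hcard; exact_mod_cast hcard
  have hpp : p.IsPrime := inferInstance
  rw [Nat.add_sub_cancel] at hp ⊢
  obtain ⟨a, c⟩ := aux_ctx R s hs d hcard' hdim p ((aux_height_prime R p).symm.trans hp)
  obtain ⟨H, _, _, ε, h⟩ := c.exists_rep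
  obtain ⟨E₀, _, _, φ, l⟩ := h.exists_loc c
  have hE₀ := l.injective h c
  have hQ := l.quot_injective h c (fun k => aux_chevalley R s hs (d+1) hcard' hdim p a c.ap k)
  have hQt := l.quot_pt h c
  have hnt : Nontrivial (E₀ ⧸ LinearMap.range φ) := by
    rw [← not_subsingleton_iff_nontrivial, Submodule.Quotient.subsingleton_iff, LinearMap.range_eq_top]
    exact l.not_surj h c
  obtain ⟨Em, _, _, jm, σ, ⟨hEm, hjm, hess⟩, hσ, ⟨eσ⟩⟩ := aux_decomp (E₀ ⧸ LinearMap.range φ) hQt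
  obtain ⟨w, hw⟩ := h.exists_ne c
  obtain ⟨e⟩ := h.locCoh
  have hr : LinearMap.range (φ ∘ₗ e.toLinearMap) = LinearMap.range φ := by
    rw [LinearMap.range_comp, LinearEquiv.range, Submodule.map_top]
  have hri : Function.Injective (φ ∘ₗ e.toLinearMap) := l.inj.comp e.injective
  refine ⟨⟨ModuleCat.of R E₀, ModuleCat.of R (ULift (E₀ ⧸ LinearMap.range φ)), ModuleCat.of R Em, φ ∘ₗ w,
    φ ∘ₗ e.toLinearMap, ULift.moduleEquiv.symm.toLinearMap ∘ₗ (LinearMap.range φ).mkQ, jm, σ, ⟨hE₀, l.inj.comp (h.inj c w hw), ?_⟩,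
    ⟨hE₀, hri, ?_⟩, ULift.moduleEquiv.symm.surjective.comp (Submodule.mkQ_surjective _), ?_, ⟨hEm, hjm, hess.hull⟩, hσ, ⟨ULift.moduleEquiv.trans eσ⟩⟩, ?_, ?_⟩
  · exact (Ess.comp (h.ess c w hw) l.ess l.inj).hull
  · intro N hN
    rw [hr]
    exact l.ess.hull N hN
  · rw [hr, LinearEquiv.ker_comp, Submodule.ker_mkQ]
  · have hQ' : Module.Injective R (E₀ ⧸ LinearMap.range (φ ∘ₗ e.toLinearMap)) := by
      rw [hr]; exact hQ
    apply le_antisymm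
    · refine sInf_le ⟨1, rfl, fun N i hi => ?_⟩
      obtain ⟨k, rfl⟩ : ∃ k, i = k + 1 + 1 := ⟨i - 2, by omega⟩
      exact aux_old_ext _ (aux_injdim_two (φ ∘ₗ e.toLinearMap) hri N k)
    · refine le_sInf ?_
      rintro _ ⟨k, rfl, hk⟩
      rcases Nat.eq_zero_or_pos k with rfl | hk0
      · exfalso
        have hi := aux_injective_of_ext (R := R) (L := LocalCohomologyMod R p d)
          fun X => aux_new_ext 1 (hk X 1 (by omega))
        exact l.not_injective h c (aux_retract e.symm.toLinearMap e.toLinearMap (fun x => by simp))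
      · exact_mod_cast hk0
  · intro t ht htm hB
    have hloc := aux_loc_injective (φ ∘ₗ e.toLinearMap) hri t (fun x => by
      rw [hr]
      obtain ⟨k, hk⟩ := hQt ((LinearMap.range φ).mkQ x)
      have hnle : ¬ IsLocalRing.maximalIdeal R ≤ t := fun hle =>
        htm (le_antisymm (IsLocalRing.le_maximalIdeal ht.ne_top) hle)
      obtain ⟨u, hum, hut⟩ := SetLike.not_le_iff_exists.1 hnle
      refine ⟨u ^ k, fun hc => hut (ht.mem_of_pow_mem k hc), ?_⟩
      have h1 := hk (u ^ k) (Ideal.pow_mem_pow hum k)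
      rw [← map_smul] at h1
      exact (Submodule.Quotient.mk_eq_zero _).1 h1)
    have h0 := aux_old_ext (R := Localization.AtPrime t)
      (X := ModuleCat.of _ (IsLocalRing.ResidueField (Localization.AtPrime t)))
      (Y := ModuleCat.of _ (LocalizedModule t.primeCompl (LocalCohomologyMod R p d))) 1 (xt_injective 0)
    exact not_subsingleton_iff_nontrivial.2 hB h0
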